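/- arXiv:2310.20600 — 7 statements merged into one kernel-verified Lean document; each statement's English description precedes it below -/
import Mathlib

section
/- Let n ≤ 3 be a natural number and let A be a set of functions T : {1,…,n} → {1,−1} with the property that for any three (not necessarily distinct) elements T₁, T₂, T₃ of A, the pointwise product T₁·T₂·T₃ is not the constant function 1. Then there exists a subset S of {1,…,n} such that ∏_{i ∈ S} T(i) = −1 for every T ∈ A. -/
/-- The case `n = 3`: the Fano plane has no 2-colouring without monochromatic lines. -/
theorem aux_three (A : Set (Fin 3 → ℤ))
    (hval : ∀ T ∈ A, ∀ i, T i = 1 ∨ T i = -1)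
    (hprod : ∀ T₁ ∈ A, ∀ T₂ ∈ A, ∀ T₃ ∈ A, ¬ (∀ i, T₁ i * T₂ i * T₃ i = 1)) :
    ∃ S : Finset (Fin 3), ∀ T ∈ A, ∏ i ∈ S, T i = -1 := by
  by_contra hcon
  have h0 : ![1, 1, 1] ∉ A := fun h => hprod _ h _ h _ h (by decide)
  have key : ∀ S : Finset (Fin 3), ∃ a b c : ℤ, (a = 1 ∨ a = -1) ∧ (b = 1 ∨ b = -1) ∧
      (c = 1 ∨ c = -1) ∧ ![a, b, c] ∈ A ∧ ∏ i ∈ S, (![a, b, c] : Fin 3 → ℤ) i ≠ -1 := by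
    intro S
    by_contra hS
    refine hcon ⟨S, fun T hT => ?_⟩
    by_contra hne
    have e : T = ![T 0, T 1, T 2] := by
      ext i
      fin_cases i <;> rfl
    exact hS ⟨T 0, T 1, T 2, hval T hT 0, hval T hT 1, hval T hT 2, e ▸ hT, by rw [← e]; exact hne⟩
  have k0 : ![1, -1, 1] ∈ A ∨ ![-1, 1, 1] ∈ A ∨ ![-1, -1, 1] ∈ A := by
    obtain ⟨a, b, c, ha, hb, hc, hm, hp⟩ := key ({2} : Finset (Fin 3))
    rcases ha with rfl | rfl <;> rcases hb with rfl | rfl <;> rcases hc with rfl | rfl <;>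
      first | exact absurd (by decide) hp | exact absurd hm h0 | simp only [hm, true_or, or_true]
  have l0 : ¬ (![1, -1, 1] ∈ A ∧ ![-1, 1, 1] ∈ A ∧ ![-1, -1, 1] ∈ A) :=
    fun ⟨h1, h2, h3⟩ => hprod _ h1 _ h2 _ h3 (by decide)
  have k1 : ![1, 1, -1] ∈ A ∨ ![-1, 1, 1] ∈ A ∨ ![-1, 1, -1] ∈ A := by
    obtain ⟨a, b, c, ha, hb, hc, hm, hp⟩ := key ({1} : Finset (Fin 3))
    rcases ha with rfl | rfl <;> rcases hb with rfl | rfl <;> rcases hc with rfl | rfl <;>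
      first | exact absurd (by decide) hp | exact absurd hm h0 | simp only [hm, true_or, or_true]
  have l1 : ¬ (![1, 1, -1] ∈ A ∧ ![-1, 1, 1] ∈ A ∧ ![-1, 1, -1] ∈ A) :=
    fun ⟨h1, h2, h3⟩ => hprod _ h1 _ h2 _ h3 (by decide)
  have k2 : ![1, -1, -1] ∈ A ∨ ![-1, 1, 1] ∈ A ∨ ![-1, -1, -1] ∈ A := by
    obtain ⟨a, b, c, ha, hb, hc, hm, hp⟩ := key ({1, 2} : Finset (Fin 3))
    rcases ha with rfl | rfl <;> rcases hb with rfl | rfl <;> rcases hc with rfl | rfl <;>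
      first | exact absurd (by decide) hp | exact absurd hm h0 | simp only [hm, true_or, or_true]
  have l2 : ¬ (![1, -1, -1] ∈ A ∧ ![-1, 1, 1] ∈ A ∧ ![-1, -1, -1] ∈ A) :=
    fun ⟨h1, h2, h3⟩ => hprod _ h1 _ h2 _ h3 (by decide)
  have k3 : ![1, 1, -1] ∈ A ∨ ![1, -1, 1] ∈ A ∨ ![1, -1, -1] ∈ A := by
    obtain ⟨a, b, c, ha, hb, hc, hm, hp⟩ := key ({0} : Finset (Fin 3))
    rcases ha with rfl | rfl <;> rcases hb with rfl | rfl <;> rcases hc with rfl | rfl <;>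
      first | exact absurd (by decide) hp | exact absurd hm h0 | simp only [hm, true_or, or_true]
  have l3 : ¬ (![1, 1, -1] ∈ A ∧ ![1, -1, 1] ∈ A ∧ ![1, -1, -1] ∈ A) :=
    fun ⟨h1, h2, h3⟩ => hprod _ h1 _ h2 _ h3 (by decide)
  have k4 : ![1, -1, 1] ∈ A ∨ ![-1, 1, -1] ∈ A ∨ ![-1, -1, -1] ∈ A := by
    obtain ⟨a, b, c, ha, hb, hc, hm, hp⟩ := key ({0, 2} : Finset (Fin 3))
    rcases ha with rfl | rfl <;> rcases hb with rfl | rfl <;> rcases hc with rfl | rfl <;>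
      first | exact absurd (by decide) hp | exact absurd hm h0 | simp only [hm, true_or, or_true]
  have l4 : ¬ (![1, -1, 1] ∈ A ∧ ![-1, 1, -1] ∈ A ∧ ![-1, -1, -1] ∈ A) :=
    fun ⟨h1, h2, h3⟩ => hprod _ h1 _ h2 _ h3 (by decide)
  have k5 : ![1, 1, -1] ∈ A ∨ ![-1, -1, 1] ∈ A ∨ ![-1, -1, -1] ∈ A := by
    obtain ⟨a, b, c, ha, hb, hc, hm, hp⟩ := key ({0, 1} : Finset (Fin 3))
    rcases ha with rfl | rfl <;> rcases hb with rfl | rfl <;> rcases hc with rfl | rfl <;>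
      first | exact absurd (by decide) hp | exact absurd hm h0 | simp only [hm, true_or, or_true]
  have l5 : ¬ (![1, 1, -1] ∈ A ∧ ![-1, -1, 1] ∈ A ∧ ![-1, -1, -1] ∈ A) :=
    fun ⟨h1, h2, h3⟩ => hprod _ h1 _ h2 _ h3 (by decide)
  have k6 : ![1, -1, -1] ∈ A ∨ ![-1, 1, -1] ∈ A ∨ ![-1, -1, 1] ∈ A := by
    obtain ⟨a, b, c, ha, hb, hc, hm, hp⟩ := key ({0, 1, 2} : Finset (Fin 3))
    rcases ha with rfl | rfl <;> rcases hb with rfl | rfl <;> rcases hc with rfl | rfl <;>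
      first | exact absurd (by decide) hp | exact absurd hm h0 | simp only [hm, true_or, or_true]
  have l6 : ¬ (![1, -1, -1] ∈ A ∧ ![-1, 1, -1] ∈ A ∧ ![-1, -1, 1] ∈ A) :=
    fun ⟨h1, h2, h3⟩ => hprod _ h1 _ h2 _ h3 (by decide)
  clear key hcon h0 hprod hval
  generalize (![1, 1, -1] ∈ A) = p0 at *
  generalize (![1, -1, 1] ∈ A) = p1 at *
  generalize (![1, -1, -1] ∈ A) = p2 at *
  generalize (![-1, 1, 1] ∈ A) = p3 at *
  generalize (![-1, 1, -1] ∈ A) = p4 at *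
  generalize (![-1, -1, 1] ∈ A) = p5 at *
  generalize (![-1, -1, -1] ∈ A) = p6 at *
  grind

/-- Let `n ≤ 3` and let `A` be a set of functions `T : Fin n → ℤ`
taking values in `{1, -1}`, such that for any three (not necessarily distinct)
elements `T₁, T₂, T₃` of `A` the pointwise product `T₁ · T₂ · T₃` is not the
constant function `1`.  Then there is a subset `S ⊆ Fin n` such that
`∏ i ∈ S, T i = -1` for every `T ∈ A`. -/
theorem stmt0 (n : ℕ) (hn : n ≤ 3) (A : Set (Fin n → ℤ))
    (hval : ∀ T ∈ A, ∀ i, T i = 1 ∨ T i = -1)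
    (hprod : ∀ T₁ ∈ A, ∀ T₂ ∈ A, ∀ T₃ ∈ A, ¬ (∀ i, T₁ i * T₂ i * T₃ i = 1)) :
    ∃ S : Finset (Fin n), ∀ T ∈ A, ∏ i ∈ S, T i = -1 := by
  -- Extend each `T` by `1` to a function on `Fin 3`.
  obtain ⟨S, hS⟩ := aux_three
    (Set.image (fun (T : Fin n → ℤ) (j : Fin 3) => if h : j.1 < n then T ⟨j.1, h⟩ else 1) A)
    (by
      rintro _ ⟨T, hT, rfl⟩ i
      by_cases h : i.1 < n
      · simpa [h] using hval T hT ⟨i.1, h⟩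
      · simp [h])
    (by
      rintro _ ⟨T, hT, rfl⟩ _ ⟨U, hU, rfl⟩ _ ⟨V, hV, rfl⟩ h
      refine hprod T hT U hU V hV fun i => ?_
      simpa using h (Fin.castLE hn i))
  refine ⟨Finset.univ.filter fun i => Fin.castLE hn i ∈ S, fun T hT => ?_⟩
  rw [← hS _ ⟨T, hT, rfl⟩]
  refine Finset.prod_of_injOn (Fin.castLE hn) ((Fin.castLE_injective hn).injOn) ?_ ?_ ?_
  · intro i hi
    simpa using hi
  · intro j hj hk
    have : ¬ j.1 < n := fun h => hk ⟨⟨j.1, h⟩, by simpa using hj, rfl⟩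
    simp [this]
  · intro i _
    simp
end

section
/- Let m ≥ 3, let G be the dihedral group of order 2m, let W₁ and W₂ be irreducible 2-dimensional complex representations of G, and let χ : G → ℂ^× be a group homomorphism that is trivial on the rotation subgroup of G. If W₁ and W₂ are isomorphic, then there exists a nonzero G-invariant trilinear form on W₁ × W₂ × χ; if W₁ and W₂ are not isomorphic, then every G-invariant trilinear form on W₁ × W₂ × χ is zero. -/
/-- A representation is irreducible if the underlying space is nonzero and the only
subspaces stable under the group action are `⊥` and `⊤`. -/
def IsIrreducibleRep {k G V : Type*} [CommSemiring k] [Monoid G]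
    [AddCommMonoid V] [Module k V] (ρ : Representation k G V) : Prop :=
  (∃ v : V, v ≠ 0) ∧
    ∀ p : Submodule k V, (∀ (g : G) (v : V), v ∈ p → ρ g v ∈ p) → p = ⊥ ∨ p = ⊤

open DihedralGroup in
theorem dih_induct {m : ℕ} (hm : 3 ≤ m) (P : DihedralGroup m → Prop)
    (hone : P 1) (hmul : ∀ a b, P a → P b → P (a * b)) (hr : P (r 1)) (hs : P (sr 0)) :
    ∀ g, P g := by
  haveI : NeZero m := ⟨by omega⟩
  have hpow : ∀ k : ℕ, P (r 1 ^ k) := by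
    intro k
    induction k with
    | zero => simpa using hone
    | succ k ih => rw [pow_succ]; exact hmul _ _ ih hr
  have hrot : ∀ i : ZMod m, P (r i) := by
    intro i
    have := hpow i.val
    rwa [r_one_pow, ZMod.natCast_zmod_val] at this
  intro g
  cases g with
  | r i => exact hrot i
  | sr i =>
    have := hmul _ _ hs (hrot i)
    rwa [sr_mul_r, zero_add] at this

/-- A basis adapted to a two-dimensional representation of the dihedral group. -/
structure Adapted {m : ℕ} {V : Type*} [AddCommGroup V] [Module ℂ V]
    (ρ : Representation ℂ (DihedralGroup m) V) (b : Module.Basis (Fin 2) ℂ V) (l : ℂ) : Prop where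
  ne : l ≠ 0
  r0 : ρ (DihedralGroup.r 1) (b 0) = l • b 0
  r1 : ρ (DihedralGroup.r 1) (b 1) = l⁻¹ • b 1
  s0 : ρ (DihedralGroup.sr 0) (b 0) = b 1
  s1 : ρ (DihedralGroup.sr 0) (b 1) = b 0

open DihedralGroup in
theorem exists_adapted {m : ℕ} (hm : 3 ≤ m) {V : Type*} [AddCommGroup V] [Module ℂ V]
    (ρ : Representation ℂ (DihedralGroup m) V) (h : IsIrreducibleRep ρ)
    (d : Module.finrank ℂ V = 2) : ∃ b l, Adapted ρ b l := by
  haveI : FiniteDimensional ℂ V := Module.finite_of_finrank_eq_succ d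
  haveI : Nontrivial V := Module.nontrivial_of_finrank_pos (R := ℂ) (by omega)
  obtain ⟨l, hl⟩ := Module.End.exists_eigenvalue (ρ (r 1))
  obtain ⟨v, hv⟩ := hl.exists_hasEigenvector
  have hv0 : v ≠ 0 := hv.2
  have hRv : ρ (r 1) v = l • v := hv.apply_eq_smul
  have hl0 : l ≠ 0 := by
    rintro rfl
    apply hv0
    have : ρ (r (-1)) (ρ (r 1) v) = v := by
      rw [← Module.End.mul_apply, ← map_mul, r_mul_r]; simp [← one_def]
    rw [← this, hRv]; simp
  have hSS : ∀ x, ρ (sr 0) (ρ (sr 0) x) = x := by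
    intro x
    rw [← Module.End.mul_apply, ← map_mul, sr_mul_sr]; simp [← one_def]
  have hRSR : ρ (r 1) (ρ (sr 0) (ρ (r 1) v)) = ρ (sr 0) v := by
    rw [← Module.End.mul_apply, ← Module.End.mul_apply, ← map_mul, ← map_mul, mul_assoc, sr_mul_r, r_mul_sr]
    simp
  have hRw : ρ (r 1) (ρ (sr 0) v) = l⁻¹ • ρ (sr 0) v := by
    rw [hRv, map_smul, map_smul] at hRSR
    rw [← hRSR, smul_smul, inv_mul_cancel₀ hl0, one_smul, hRSR]
  set w := ρ (sr 0) v with hw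
  let f : Fin 2 → V := ![v, w]
  have hvm : v ∈ Submodule.span ℂ (Set.range f) := Submodule.subset_span ⟨0, rfl⟩
  have hwm : w ∈ Submodule.span ℂ (Set.range f) := Submodule.subset_span ⟨1, rfl⟩
  have key : ∀ a : DihedralGroup m, ρ a v ∈ Submodule.span ℂ (Set.range f) →
      ρ a w ∈ Submodule.span ℂ (Set.range f) →
      ∀ x ∈ Submodule.span ℂ (Set.range f), ρ a x ∈ Submodule.span ℂ (Set.range f) := by
    intro a h0 h1 x hx
    have : Submodule.span ℂ (Set.range f) ≤ (Submodule.span ℂ (Set.range f)).comap (ρ a) := by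
      rw [Submodule.span_le]
      rintro _ ⟨i, rfl⟩
      fin_cases i
      · exact h0
      · exact h1
    exact this hx
  have hinv := dih_induct hm (fun g => ∀ x, x ∈ Submodule.span ℂ (Set.range f) →
      ρ g x ∈ Submodule.span ℂ (Set.range f)) (by simp)
      (by intro a b ha hb x hx; rw [map_mul]; exact ha _ (hb _ hx))
      (key _ (by rw [hRv]; exact Submodule.smul_mem _ _ hvm)
        (by rw [hRw]; exact Submodule.smul_mem _ _ hwm))
      (key _ hwm (by rw [hw, hSS]; exact hvm))
  have htop : Submodule.span ℂ (Set.range f) = ⊤ := by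
    rcases h.2 _ hinv with h' | h'
    · rw [h', Submodule.mem_bot] at hvm
      exact absurd hvm hv0
    · exact h'
  refine ⟨basisOfTopLeSpanOfCardEqFinrank f htop.ge (by simp [d]), l, hl0, ?_, ?_, ?_, ?_⟩
  · simpa [f] using hRv
  · simpa [f] using hRw
  · simp [f, hw]
  · simp [f, hw, hSS]

theorem Adapted.swap {m : ℕ} {V : Type*} [AddCommGroup V] [Module ℂ V]
    {ρ : Representation ℂ (DihedralGroup m) V} {b : Module.Basis (Fin 2) ℂ V} {l : ℂ}
    (h : Adapted ρ b l) : Adapted ρ (b.reindex (Equiv.swap 0 1)) l⁻¹ := by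
  refine ⟨inv_ne_zero h.ne, ?_, ?_, ?_, ?_⟩ <;> simp [h.r0, h.r1, h.s0, h.s1]

theorem Adapted.iso {m : ℕ} (hm : 3 ≤ m) {V₁ V₂ : Type*} [AddCommGroup V₁] [Module ℂ V₁]
    [AddCommGroup V₂] [Module ℂ V₂]
    {ρ₁ : Representation ℂ (DihedralGroup m) V₁} {b : Module.Basis (Fin 2) ℂ V₁} {l : ℂ}
    {ρ₂ : Representation ℂ (DihedralGroup m) V₂} {c : Module.Basis (Fin 2) ℂ V₂}
    (h : Adapted ρ₁ b l) (h' : Adapted ρ₂ c l) :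
    ∃ e : V₁ ≃ₗ[ℂ] V₂, ∀ (g : DihedralGroup m) (v : V₁), e (ρ₁ g v) = ρ₂ g (e v) := by
  refine ⟨b.equiv c (Equiv.refl _), ?_⟩
  have key : ∀ g, (∀ i, b.equiv c (Equiv.refl _) (ρ₁ g (b i)) =
      ρ₂ g (b.equiv c (Equiv.refl _) (b i))) →
      ∀ v, b.equiv c (Equiv.refl _) (ρ₁ g v) = ρ₂ g (b.equiv c (Equiv.refl _) v) := by
    intro g hg v
    have : (b.equiv c (Equiv.refl _)).toLinearMap ∘ₗ ρ₁ g =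
        ρ₂ g ∘ₗ (b.equiv c (Equiv.refl _)).toLinearMap := b.ext (fun i => by simpa using hg i)
    exact LinearMap.congr_fun this v
  apply dih_induct hm
  · simp
  · intro x y hx hy v
    simp [map_mul, hx, hy]
  · apply key
    intro i
    fin_cases i <;> simp [h.r0, h.r1, h'.r0, h'.r1]
  · apply key
    intro i
    fin_cases i <;> simp [h.s0, h.s1, h'.s0, h'.s1]

/-- Let `m ≥ 3`, let `G` be the dihedral group of order `2m`, let
`W₁, W₂` be irreducible `2`-dimensional complex representations of `G`, and let
`χ : G → ℂˣ` be a homomorphism trivial on the rotation subgroup.  If `W₁ ≅ W₂`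
there is a nonzero `G`-invariant trilinear form on `W₁ × W₂ × χ`; if `W₁ ≇ W₂`
every such invariant trilinear form is zero. -/
theorem stmt1 (m : ℕ) (hm : 3 ≤ m)
    {V₁ V₂ : Type*} [AddCommGroup V₁] [Module ℂ V₁] [AddCommGroup V₂] [Module ℂ V₂]
    (ρ₁ : Representation ℂ (DihedralGroup m) V₁)
    (ρ₂ : Representation ℂ (DihedralGroup m) V₂)
    (h₁ : IsIrreducibleRep ρ₁) (d₁ : Module.finrank ℂ V₁ = 2)
    (h₂ : IsIrreducibleRep ρ₂) (d₂ : Module.finrank ℂ V₂ = 2)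
    (χ : DihedralGroup m →* ℂˣ)
    (hχ : ∀ i : ZMod m, χ (DihedralGroup.r i) = 1) :
    ((∃ e : V₁ ≃ₗ[ℂ] V₂, ∀ (g : DihedralGroup m) (v : V₁), e (ρ₁ g v) = ρ₂ g (e v)) →
      ∃ Λ : V₁ →ₗ[ℂ] V₂ →ₗ[ℂ] ℂ →ₗ[ℂ] ℂ, Λ ≠ 0 ∧
        ∀ (g : DihedralGroup m) (v₁ : V₁) (v₂ : V₂) (z : ℂ),
          Λ (ρ₁ g v₁) (ρ₂ g v₂) ((χ g : ℂ) * z) = Λ v₁ v₂ z) ∧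
    ((¬ ∃ e : V₁ ≃ₗ[ℂ] V₂, ∀ (g : DihedralGroup m) (v : V₁), e (ρ₁ g v) = ρ₂ g (e v)) →
      ∀ Λ : V₁ →ₗ[ℂ] V₂ →ₗ[ℂ] ℂ →ₗ[ℂ] ℂ,
        (∀ (g : DihedralGroup m) (v₁ : V₁) (v₂ : V₂) (z : ℂ),
          Λ (ρ₁ g v₁) (ρ₂ g v₂) ((χ g : ℂ) * z) = Λ v₁ v₂ z) → Λ = 0) := by
  obtain ⟨b, l, hb⟩ := exists_adapted hm ρ₁ h₁ d₁
  obtain ⟨c, k, hc⟩ := exists_adapted hm ρ₂ h₂ d₂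
  have hR : ((χ (DihedralGroup.r 1) : ℂˣ) : ℂ) = 1 := by rw [hχ]; simp
  have hε : ((χ (DihedralGroup.sr 0) : ℂˣ) : ℂ) * (χ (DihedralGroup.sr 0) : ℂˣ) = 1 := by
    rw [← Units.val_mul, ← map_mul, DihedralGroup.sr_mul_sr, hχ]; simp
  set ε : ℂ := ((χ (DihedralGroup.sr 0) : ℂˣ) : ℂ) with hεd
  constructor
  · rintro ⟨e, he⟩
    let B : V₂ →ₗ[ℂ] V₂ →ₗ[ℂ] ℂ →ₗ[ℂ] ℂ := LinearMap.mk₂ ℂ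
      (fun x y => (c.repr x 0 * c.repr y 1 + ε * (c.repr x 1 * c.repr y 0)) • LinearMap.id)
      (by intros; ext; simp; ring) (by intros; ext; simp; ring)
      (by intros; ext; simp; ring) (by intros; ext; simp; ring)
    have hB : ∀ x y z, B x y z =
        (c.repr x 0 * c.repr y 1 + ε * (c.repr x 1 * c.repr y 0)) * z := by
      intros; simp [B]
    have exp : ∀ x, x = c.repr x 0 • c 0 + c.repr x 1 • c 1 := by
      intro x
      conv_lhs => rw [← c.sum_repr x, Fin.sum_univ_two]
    have cR : ∀ x, c.repr (ρ₂ (DihedralGroup.r 1) x) 0 = k * c.repr x 0 ∧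
        c.repr (ρ₂ (DihedralGroup.r 1) x) 1 = k⁻¹ * c.repr x 1 := by
      intro x
      have : ρ₂ (DihedralGroup.r 1) x =
          c.repr x 0 • k • c 0 + c.repr x 1 • k⁻¹ • c 1 := by
        conv_lhs => rw [exp x]
        rw [map_add, map_smul, map_smul, hc.r0, hc.r1]
      rw [this]
      constructor <;> simp [Module.Basis.repr_self, mul_comm]
    have cS : ∀ x, c.repr (ρ₂ (DihedralGroup.sr 0) x) 0 = c.repr x 1 ∧
        c.repr (ρ₂ (DihedralGroup.sr 0) x) 1 = c.repr x 0 := by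
      intro x
      have : ρ₂ (DihedralGroup.sr 0) x =
          c.repr x 0 • c 1 + c.repr x 1 • c 0 := by
        conv_lhs => rw [exp x]
        rw [map_add, map_smul, map_smul, hc.s0, hc.s1]
      rw [this]
      constructor <;> simp [Module.Basis.repr_self]
    have hk := mul_inv_cancel₀ hc.ne
    have inv : ∀ (g : DihedralGroup m) (x y : V₂) (z : ℂ),
        B (ρ₂ g x) (ρ₂ g y) ((χ g : ℂ) * z) = B x y z := by
      apply dih_induct hm
      · simp
      · intro g h hg hh x y z
        simp only [map_mul, Module.End.mul_apply, Units.val_mul, mul_assoc]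
        rw [hg, hh]
      · intro x y z
        rw [hB, hB, hR, (cR x).1, (cR x).2, (cR y).1, (cR y).2]
        linear_combination (c.repr x 0 * c.repr y 1 + ε * (c.repr x 1 * c.repr y 0)) * z * hk
      · intro x y z
        rw [hB, hB, ← hεd, (cS x).1, (cS x).2, (cS y).1, (cS y).2]
        linear_combination (c.repr x 0 * c.repr y 1) * z * hε
    refine ⟨B ∘ₗ e.toLinearMap, ?_, ?_⟩
    · intro h0
      have h1 : B (c 0) (c 1) 1 = 0 := by
        have := LinearMap.congr_fun h0 (e.symm (c 0))
        simp only [LinearMap.comp_apply, LinearEquiv.coe_coe, LinearEquiv.apply_symm_apply] at this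
        rw [this]; simp
      rw [hB] at h1
      simp at h1
    · intro g x y z
      simp only [LinearMap.comp_apply, LinearEquiv.coe_coe, he]
      exact inv g _ _ _
  · intro hno Λ hΛ
    have n1 : l * k ≠ 1 := by
      intro h
      apply hno
      have h' := hc.swap
      rw [← eq_inv_of_mul_eq_one_left h] at h'
      exact hb.iso hm h'
    have n2 : l * k⁻¹ ≠ 1 := by
      intro h
      apply hno
      have : l = k := by
        have := hc.ne
        field_simp at h
        exact h
      rw [← this] at hc
      exact hb.iso hm hc
    have z00 : Λ (b 0) (c 0) 1 = 0 := by
      have := hΛ (DihedralGroup.r 1) (b 0) (c 0) 1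
      rw [hR, hb.r0, hc.r0] at this
      simp at this
      have h3 : (l * k - 1) * Λ (b 0) (c 0) 1 = 0 := by linear_combination this
      exact (mul_eq_zero.mp h3).resolve_left (sub_ne_zero.mpr n1)
    have z01 : Λ (b 0) (c 1) 1 = 0 := by
      have := hΛ (DihedralGroup.r 1) (b 0) (c 1) 1
      rw [hR, hb.r0, hc.r1] at this
      simp only [map_smul, LinearMap.smul_apply, smul_eq_mul, mul_one] at this
      have h3 : (l * k⁻¹ - 1) * Λ (b 0) (c 1) 1 = 0 := by linear_combination this
      exact (mul_eq_zero.mp h3).resolve_left (sub_ne_zero.mpr n2)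
    have sc : ∀ x y (z : ℂ), Λ x y z = z * Λ x y 1 := by
      intro x y z
      rw [← smul_eq_mul, ← map_smul, smul_eq_mul, mul_one]
    have z11 : Λ (b 1) (c 1) 1 = 0 := by
      have := hΛ (DihedralGroup.sr 0) (b 1) (c 1) 1
      rw [hb.s1, hc.s1, sc, z00] at this
      simpa using this.symm
    have z10 : Λ (b 1) (c 0) 1 = 0 := by
      have := hΛ (DihedralGroup.sr 0) (b 1) (c 0) 1
      rw [hb.s1, hc.s0, sc, z01] at this
      simpa using this.symm
    refine b.ext fun i => c.ext fun j => LinearMap.ext_ring ?_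
    fin_cases i <;> fin_cases j
    · simpa using z00
    · simpa using z01
    · simpa using z10
    · simpa using z11
end

section
/- Let G be the dihedral group of order 8, let W be an irreducible 2-dimensional complex representation of G, and let χ : G → ℂ^× be an arbitrary group homomorphism. Then there exists a nonzero G-invariant trilinear form on W × W × χ. -/
theorem stmt2_inv {V : Type*} [AddCommGroup V] [Module ℂ V]
    (ρ : Representation ℂ (DihedralGroup 4) V) (P : DihedralGroup 4 → Prop)
    (h1 : P 1) (hm : ∀ g h, P g → P h → P (g * h))
    (hr : P (DihedralGroup.r 1)) (hs : P (DihedralGroup.sr 0)) : ∀ g, P g := by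
  have hp : ∀ n : ℕ, P (DihedralGroup.r 1 ^ n) := by
    intro n
    induction n with
    | zero => simpa using h1
    | succ n ih => rw [pow_succ]; exact hm _ _ ih hr
  have key : ∀ g : DihedralGroup 4, ∃ n : Fin 4, g = DihedralGroup.r 1 ^ (n : ℕ) ∨
      g = DihedralGroup.sr 0 * DihedralGroup.r 1 ^ (n : ℕ) := by decide
  intro g
  obtain ⟨n, h | h⟩ := key g
  · rw [h]; exact hp _
  · rw [h]; exact hm _ _ hs (hp _)

/-- Let `G` be the dihedral group of order `8` (`DihedralGroup 4`),
`W` an irreducible `2`-dimensional complex representation of `G`, and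
`χ : G → ℂˣ` any homomorphism.  Then there is a nonzero `G`-invariant trilinear
form on `W × W × χ`. -/
theorem stmt2 {V : Type*} [AddCommGroup V] [Module ℂ V]
    (ρ : Representation ℂ (DihedralGroup 4) V)
    (hirr : IsIrreducibleRep ρ) (hdim : Module.finrank ℂ V = 2)
    (χ : DihedralGroup 4 →* ℂˣ) :
    ∃ Λ : V →ₗ[ℂ] V →ₗ[ℂ] ℂ →ₗ[ℂ] ℂ, Λ ≠ 0 ∧
      ∀ (g : DihedralGroup 4) (v₁ v₂ : V) (z : ℂ),
        Λ (ρ g v₁) (ρ g v₂) ((χ g : ℂ) * z) = Λ v₁ v₂ z := by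
  obtain ⟨⟨v0, hv0⟩, hsub⟩ := hirr
  have : Nontrivial V := ⟨v0, 0, hv0⟩
  have : FiniteDimensional ℂ V := FiniteDimensional.of_finrank_pos (by omega)
  -- invariance can be tested on generators
  have hsub' : ∀ p : Submodule ℂ V, (∀ v ∈ p, ρ (DihedralGroup.r 1) v ∈ p) →
      (∀ v ∈ p, ρ (DihedralGroup.sr 0) v ∈ p) → p = ⊥ ∨ p = ⊤ := by
    intro p hr hs
    apply hsub
    apply stmt2_inv ρ (fun g => ∀ v : V, v ∈ p → ρ g v ∈ p)
    · simp
    · intro g h hg hh v hv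
      rw [map_mul]
      exact hg _ (hh _ hv)
    · exact hr
    · exact hs
  obtain ⟨μ, hμ⟩ := Module.End.exists_eigenvalue (ρ (DihedralGroup.r 1))
  obtain ⟨e, he⟩ := hμ.exists_hasEigenvector
  have he0 : e ≠ 0 := he.2
  have hRe : ρ (DihedralGroup.r 1) e = μ • e := he.apply_eq_smul
  have hSS : ∀ v, ρ (DihedralGroup.sr 0) (ρ (DihedralGroup.sr 0) v) = v := by
    intro v
    rw [← Module.End.mul_apply, ← map_mul,
      show (DihedralGroup.sr 0 * DihedralGroup.sr 0 : DihedralGroup 4) = 1 by decide]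
    simp
  have hRSR : ∀ v, ρ (DihedralGroup.r 1) (ρ (DihedralGroup.sr 0) (ρ (DihedralGroup.r 1) v))
      = ρ (DihedralGroup.sr 0) v := by
    intro v
    rw [← Module.End.mul_apply, ← Module.End.mul_apply, ← map_mul, ← map_mul,
      show (DihedralGroup.r 1 * DihedralGroup.sr 0 * DihedralGroup.r 1 : DihedralGroup 4)
        = DihedralGroup.sr 0 by decide]
  have hR4 : ∀ v, ρ (DihedralGroup.r 1) (ρ (DihedralGroup.r 1) (ρ (DihedralGroup.r 1)
      (ρ (DihedralGroup.r 1) v))) = v := by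
    intro v
    simp only [← Module.End.mul_apply, ← map_mul]
    rw [show (DihedralGroup.r 1 * (DihedralGroup.r 1 * (DihedralGroup.r 1 * DihedralGroup.r 1)) :
      DihedralGroup 4) = 1 by decide]
    simp
  have hμ4 : μ ^ 4 = 1 := by
    have h := hR4 e
    simp only [hRe, map_smul, smul_smul] at h
    have h2 : (μ ^ 4 - 1) • e = 0 := by
      rw [sub_smul, one_smul, sub_eq_zero]
      rw [← h]; simp only [h]
      convert h using 2; ring
    rcases smul_eq_zero.1 h2 with h3 | h3
    · linear_combination h3
    · exact absurd h3 he0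
  have hμ0 : μ ≠ 0 := by rintro rfl; norm_num at hμ4
  obtain ⟨f, hf⟩ : ∃ f, f = ρ (DihedralGroup.sr 0) e := ⟨_, rfl⟩
  have hSe : ρ (DihedralGroup.sr 0) e = f := hf.symm
  have hSf : ρ (DihedralGroup.sr 0) f = e := by rw [hf, hSS]
  have hRf : ρ (DihedralGroup.r 1) f = μ⁻¹ • f := by
    have h := hRSR e
    rw [hRe, map_smul, map_smul, hSe] at h
    rw [eq_inv_smul_iff₀ hμ0, h]
  have hspan : Submodule.span ℂ (Set.range ![e, f]) = ⊤ := by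
    have hmem : ∀ i, ![e, f] i ∈ Submodule.span ℂ (Set.range ![e, f]) :=
      fun i => Submodule.subset_span ⟨i, rfl⟩
    have hem : e ∈ Submodule.span ℂ (Set.range ![e, f]) := hmem 0
    have hfm : f ∈ Submodule.span ℂ (Set.range ![e, f]) := hmem 1
    refine Or.elim (hsub' (Submodule.span ℂ (Set.range ![e, f])) ?_ ?_) (fun h => ?_) (fun h => ?_)
    rotate_left 2
    · rw [h, Submodule.mem_bot] at hem
      exact absurd hem he0
    · exact h
    · intro v hv
      induction hv using Submodule.span_induction with
      | mem x hx =>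
        obtain ⟨i, rfl⟩ := hx
        fin_cases i
        · simpa [hRe] using Submodule.smul_mem _ μ hem
        · simpa [hRf] using Submodule.smul_mem _ μ⁻¹ hfm
      | zero => simp
      | add x y _ _ hx hy => rw [map_add]; exact Submodule.add_mem _ hx hy
      | smul a x _ hx => rw [map_smul]; exact Submodule.smul_mem _ _ hx
    · intro v hv
      induction hv using Submodule.span_induction with
      | mem x hx =>
        obtain ⟨i, rfl⟩ := hx
        fin_cases i
        · simpa [hSe] using hfm
        · simpa [hSf] using hem
      | zero => simp
      | add x y _ _ hx hy => rw [map_add]; exact Submodule.add_mem _ hx hy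
      | smul a x _ hx => rw [map_smul]; exact Submodule.smul_mem _ _ hx
  obtain ⟨b, hb⟩ : ∃ b : Module.Basis (Fin 2) ℂ V, ⇑b = ![e, f] :=
    ⟨basisOfTopLeSpanOfCardEqFinrank ![e, f] hspan.ge (by simp [hdim]), by simp⟩
  have hb0 : b 0 = e := by simp [hb]
  have hb1 : b 1 = f := by simp [hb]
  obtain ⟨x, hx⟩ : ∃ x, x = b.coord 0 := ⟨_, rfl⟩
  obtain ⟨y, hy⟩ : ∃ y, y = b.coord 1 := ⟨_, rfl⟩
  have hxe : x e = 1 := by simp [hx, ← hb0]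
  have hxf : x f = 0 := by simp [hx, ← hb1]
  have hye : y e = 0 := by simp [hy, ← hb0]
  have hyf : y f = 1 := by simp [hy, ← hb1]
  have ext2 : ∀ A B : V →ₗ[ℂ] ℂ, A e = B e → A f = B f → ∀ v, A v = B v := by
    intro A B h0 h1 v
    have : A = B := by
      apply b.ext
      intro i
      fin_cases i
      · simpa [hb0] using h0
      · simpa [hb1] using h1
    rw [this]
  have hxR : ∀ v, x (ρ (DihedralGroup.r 1) v) = μ * x v :=
    ext2 (x ∘ₗ ρ (DihedralGroup.r 1)) (μ • x) (by simp [hRe]) (by simp [hRf, hxf])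
  have hyR : ∀ v, y (ρ (DihedralGroup.r 1) v) = μ⁻¹ * y v :=
    ext2 (y ∘ₗ ρ (DihedralGroup.r 1)) (μ⁻¹ • y) (by simp [hRe, hye]) (by simp [hRf])
  have hxS : ∀ v, x (ρ (DihedralGroup.sr 0) v) = y v :=
    ext2 (x ∘ₗ ρ (DihedralGroup.sr 0)) y (by simp [hSe, hxf, hye]) (by simp [hSf, hxe, hyf])
  have hyS : ∀ v, y (ρ (DihedralGroup.sr 0) v) = x v :=
    ext2 (y ∘ₗ ρ (DihedralGroup.sr 0)) x (by simp [hSe, hxe, hyf]) (by simp [hSf, hxf, hye])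
  have hμ2 : μ ^ 2 = -1 := by
    have h : (μ ^ 2 - 1) * (μ ^ 2 + 1) = 0 := by linear_combination hμ4
    rcases mul_eq_zero.1 h with h | h
    · exfalso
      have hinv : μ⁻¹ = μ := by
        apply inv_eq_of_mul_eq_one_right; linear_combination h
      rw [hinv] at hRf
      refine Or.elim (hsub' (Submodule.span ℂ {e + f}) ?_ ?_) (fun h => ?_) (fun h => ?_)
      rotate_left 2
      · have : e + f = 0 := by simpa using h
        have h2 := congrArg x this
        simp [hxe, hxf] at h2
      · have : e ∈ Submodule.span ℂ {e + f} := by rw [h]; trivial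
        obtain ⟨c, hc⟩ := Submodule.mem_span_singleton.1 this
        have h2 := congrArg x hc
        have h3 := congrArg y hc
        simp [hxe, hxf, hye, hyf] at h2 h3
        rw [h2] at h3
        exact one_ne_zero h3
      · intro v hv
        obtain ⟨c, rfl⟩ := Submodule.mem_span_singleton.1 hv
        refine Submodule.mem_span_singleton.2 ⟨c * μ, ?_⟩
        rw [map_smul, map_add, hRe, hRf]; module
      · intro v hv
        obtain ⟨c, rfl⟩ := Submodule.mem_span_singleton.1 hv
        refine Submodule.mem_span_singleton.2 ⟨c, ?_⟩
        rw [map_smul, map_add, hSe, hSf]; module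
    · linear_combination h
  have hinv : μ⁻¹ = -μ := by
    apply inv_eq_of_mul_eq_one_right; linear_combination -hμ2
  rw [hinv] at hyR
  obtain ⟨β, hβ⟩ : ∃ β : ℂ, β = χ (DihedralGroup.sr 0) := ⟨_, rfl⟩
  obtain ⟨α, hα⟩ : ∃ α : ℂ, α = χ (DihedralGroup.r 1) := ⟨_, rfl⟩
  have hβ2 : β * β = 1 := by
    rw [hβ, ← Units.val_mul, ← map_mul,
      show (DihedralGroup.sr 0 * DihedralGroup.sr 0 : DihedralGroup 4) = 1 by decide]
    simp
  have hα2 : α * α = 1 := by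
    have h : (χ (DihedralGroup.r 1 * DihedralGroup.sr 0 * DihedralGroup.r 1) : ℂ)
        = χ (DihedralGroup.sr 0) := by
      rw [show (DihedralGroup.r 1 * DihedralGroup.sr 0 * DihedralGroup.r 1 : DihedralGroup 4)
        = DihedralGroup.sr 0 by decide]
    rw [map_mul, map_mul, Units.val_mul, Units.val_mul, ← hα, ← hβ] at h
    linear_combination β * h + (1 - α * α) * hβ2
  have fin : ∀ Λ : V →ₗ[ℂ] V →ₗ[ℂ] ℂ →ₗ[ℂ] ℂ,
      (∀ v w z, Λ (ρ (DihedralGroup.r 1) v) (ρ (DihedralGroup.r 1) w) (α * z) = Λ v w z) →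
      (∀ v w z, Λ (ρ (DihedralGroup.sr 0) v) (ρ (DihedralGroup.sr 0) w) (β * z) = Λ v w z) →
      ∀ (g : DihedralGroup 4) (v₁ v₂ : V) (z : ℂ),
        Λ (ρ g v₁) (ρ g v₂) ((χ g : ℂ) * z) = Λ v₁ v₂ z := by
    intro Λ hr hs
    apply stmt2_inv ρ
    · simp
    · intro g h hg hh v w z
      rw [map_mul ρ, map_mul χ, Units.val_mul, mul_assoc, Module.End.mul_apply,
        Module.End.mul_apply, hg, hh]
    · rw [← hα]; exact hr
    · rw [← hβ]; exact hs
  have hαc : α = 1 ∨ α = -1 := mul_self_eq_one_iff.1 hα2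
  rcases hαc with h1 | h1
  · refine ⟨x.smulRight (y.smulRight LinearMap.id) + β • y.smulRight (x.smulRight LinearMap.id),
      ?_, fin _ ?_ ?_⟩
    · intro h
      have := congrArg (fun L => L e f 1) h
      simp [hxe, hxf, hye, hyf] at this
    · intro v w z
      simp [hxR, hyR, h1]
      linear_combination (-x v * y w * z - β * y v * x w * z) * hμ2
    · intro v w z
      simp [hxS, hyS]
      linear_combination (x v * y w * z) * hβ2
  · refine ⟨x.smulRight (x.smulRight LinearMap.id) + β • y.smulRight (y.smulRight LinearMap.id),
      ?_, fin _ ?_ ?_⟩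
    · intro h
      have := congrArg (fun L => L e e 1) h
      simp [hxe, hxf, hye, hyf] at this
    · intro v w z
      simp [hxR, hyR, h1]
      linear_combination (-x v * x w * z - β * y v * y w * z) * hμ2
    · intro v w z
      simp [hxS, hyS]
      linear_combination (x v * x w * z) * hβ2
end

section
/- Let G be the dihedral group of order 8 or the dihedral group of order 16, and let W be any irreducible 2-dimensional complex representation of G. Then every G-invariant trilinear form on W × W × W is zero. -/
theorem stable_of_gens {m : ℕ} [NeZero m] {V : Type*} [AddCommGroup V] [Module ℂ V]
    (ρ : Representation ℂ (DihedralGroup m) V) (p : Submodule ℂ V)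
    (hr : ∀ v ∈ p, ρ (DihedralGroup.r 1) v ∈ p)
    (hs : ∀ v ∈ p, ρ (DihedralGroup.sr 0) v ∈ p)
    (g : DihedralGroup m) (v : V) (hv : v ∈ p) : ρ g v ∈ p := by
  have hpow : ∀ (n : ℕ), ∀ v ∈ p, ρ ((DihedralGroup.r 1) ^ n) v ∈ p := by
    intro n
    induction n with
    | zero => intro v hv; simpa using hv
    | succ k ih =>
      intro v hv
      rw [pow_succ, map_mul]
      exact ih _ (hr v hv)
  have hri : ∀ (i : ZMod m), ∀ v ∈ p, ρ (DihedralGroup.r i) v ∈ p := by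
    intro i v hv
    have h := hpow i.val v hv
    rwa [DihedralGroup.r_one_pow, ZMod.natCast_zmod_val] at h
  cases g with
  | r i => exact hri i v hv
  | sr i =>
    have h : (DihedralGroup.sr i : DihedralGroup m)
        = DihedralGroup.sr 0 * DihedralGroup.r i := by simp
    rw [h, map_mul]
    exact hs _ (hri i v hv)

/-- Let `G` be the dihedral group of order `8` or `16`
(`DihedralGroup m` with `m = 4` or `m = 8`) and `W` an irreducible `2`-dimensional
complex representation of `G`.  Then every `G`-invariant trilinear form on
`W × W × W` is zero. -/
theorem stmt3 (m : ℕ) (hm : m = 4 ∨ m = 8)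
    {V : Type*} [AddCommGroup V] [Module ℂ V]
    (ρ : Representation ℂ (DihedralGroup m) V)
    (hirr : IsIrreducibleRep ρ) (hdim : Module.finrank ℂ V = 2)
    (Λ : V →ₗ[ℂ] V →ₗ[ℂ] V →ₗ[ℂ] ℂ)
    (hΛ : ∀ (g : DihedralGroup m) (v₁ v₂ v₃ : V),
      Λ (ρ g v₁) (ρ g v₂) (ρ g v₃) = Λ v₁ v₂ v₃) :
    Λ = 0 := by
  have hm0 : NeZero m := ⟨by omega⟩
  obtain ⟨-, hirr⟩ := hirr
  have hfin : FiniteDimensional ℂ V := Module.finite_of_finrank_pos (by omega)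
  have hnt : Nontrivial V := Module.nontrivial_of_finrank_pos (R := ℂ) (by omega)
  obtain ⟨a, ha⟩ := Module.End.exists_eigenvalue (ρ (DihedralGroup.r 1))
  obtain ⟨v, hv⟩ := ha.exists_hasEigenvector
  have hrv : ρ (DihedralGroup.r 1) v = a • v := hv.apply_eq_smul
  have hv0 : v ≠ 0 := hv.2
  -- a common eigenvector is impossible
  have key : ∀ (x : V) (c d : ℂ), ρ (DihedralGroup.r 1) x = c • x →
      ρ (DihedralGroup.sr 0) x = d • x → x = 0 := by
    intro x c d hc hd
    have hst := hirr (Submodule.span ℂ {x}) (fun g y hy => by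
      refine stable_of_gens ρ _ ?_ ?_ g y hy
      · intro z hz
        obtain ⟨t, rfl⟩ := Submodule.mem_span_singleton.1 hz
        rw [map_smul, hc]
        exact Submodule.smul_mem _ _ (Submodule.smul_mem _ _
          (Submodule.mem_span_singleton_self x))
      · intro z hz
        obtain ⟨t, rfl⟩ := Submodule.mem_span_singleton.1 hz
        rw [map_smul, hd]
        exact Submodule.smul_mem _ _ (Submodule.smul_mem _ _
          (Submodule.mem_span_singleton_self x)))
    rcases hst with h | h
    · exact Submodule.span_singleton_eq_bot.1 h
    · exfalso
      have h1 := finrank_span_le_card (R := ℂ) ({x} : Set V)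
      rw [h, finrank_top, hdim] at h1
      simp at h1
  have hmul : ∀ (g h : DihedralGroup m) (x : V), ρ g (ρ h x) = ρ (g * h) x := by
    intro g h x; rw [map_mul]; rfl
  obtain ⟨w, hw⟩ : ∃ w, w = ρ (DihedralGroup.sr 0) v := ⟨_, rfl⟩
  have hsw : ρ (DihedralGroup.sr 0) w = v := by
    rw [hw, hmul]; simp [← DihedralGroup.one_def]
  -- `a` is an `m`-th root of unity
  have hpw : ∀ n : ℕ, ρ ((DihedralGroup.r 1) ^ n) v = a ^ n • v := by
    intro n
    induction n with
    | zero => simp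
    | succ k ih => rw [pow_succ, map_mul, Module.End.mul_apply, hrv, map_smul, ih, smul_smul,
        pow_succ, mul_comm]
  have ham : a ^ m = 1 := by
    have h := hpw m
    rw [DihedralGroup.r_one_pow_n] at h
    have h2 : (a ^ m - 1) • v = 0 := by
      rw [sub_smul, ← h]; simp
    rcases smul_eq_zero.1 h2 with h3 | h3
    · exact sub_eq_zero.1 h3
    · exact absurd h3 hv0
  have ha8 : a ^ 8 = 1 := by
    rcases hm with rfl | rfl
    · calc a ^ 8 = (a ^ 4) ^ 2 := by ring
        _ = 1 := by rw [ham]; simp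
    · exact ham
  have ha0 : a ≠ 0 := by
    rintro rfl
    norm_num at ha8
  have hrw : ρ (DihedralGroup.r 1) w = a⁻¹ • w := by
    have h1 : a • ρ (DihedralGroup.r 1) w = w := by
      rw [← map_smul, hw, ← map_smul, ← hrv, hmul, hmul]
      simp
    rw [eq_inv_smul_iff₀ ha0, h1]
  have ha1 : a ≠ 1 := by
    rintro rfl
    have h1 : v + w = 0 := key (v + w) 1 1 (by rw [map_add, hrv, hrw]; simp)
      (by rw [map_add, hsw, ← hw, one_smul, add_comm])
    have h2 : w = -v := (neg_eq_of_add_eq_zero_right h1).symm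
    exact hv0 (key v 1 (-1) hrv (by rw [← hw, h2]; simp))
  have ha3 : a ^ 3 ≠ 1 := by
    intro h
    apply ha1
    have h9 : a ^ 9 = 1 := by
      calc a ^ 9 = (a ^ 3) ^ 3 := by ring
        _ = 1 := by rw [h]; simp
    calc a = a ^ 8 * a := by rw [ha8, one_mul]
      _ = a ^ 9 := by ring
      _ = 1 := h9
  -- `v, w` span
  have hspan : Submodule.span ℂ {v, w} = ⊤ := by
    have hvm : v ∈ Submodule.span ℂ ({v, w} : Set V) := Submodule.subset_span (by simp)
    have hwm : w ∈ Submodule.span ℂ ({v, w} : Set V) := Submodule.subset_span (by simp)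
    have hst := hirr (Submodule.span ℂ {v, w}) (fun g y hy => by
      refine stable_of_gens ρ _ ?_ ?_ g y hy
      · intro z hz
        obtain ⟨t, u, rfl⟩ := Submodule.mem_span_pair.1 hz
        rw [map_add, map_smul, map_smul, hrv, hrw]
        exact Submodule.add_mem _ (Submodule.smul_mem _ _ (Submodule.smul_mem _ _ hvm))
          (Submodule.smul_mem _ _ (Submodule.smul_mem _ _ hwm))
      · intro z hz
        obtain ⟨t, u, rfl⟩ := Submodule.mem_span_pair.1 hz
        rw [map_add, map_smul, map_smul, hsw, ← hw]
        exact Submodule.add_mem _ (Submodule.smul_mem _ _ hwm) (Submodule.smul_mem _ _ hvm))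
    rcases hst with h | h
    · rw [h] at hvm
      exact absurd (by simpa using hvm) hv0
    · exact h
  have hz : ∀ (x y z : V) (b c d : ℂ), ρ (DihedralGroup.r 1) x = b • x →
      ρ (DihedralGroup.r 1) y = c • y → ρ (DihedralGroup.r 1) z = d • z →
      b * c * d ≠ 1 → Λ x y z = 0 := by
    intro x y z b c d hx hy hz' hne
    have h := hΛ (DihedralGroup.r 1) x y z
    rw [hx, hy, hz'] at h
    simp only [map_smul, LinearMap.smul_apply, smul_eq_mul] at h
    have h2 : (b * c * d - 1) * Λ x y z = 0 := by linear_combination h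
    rcases mul_eq_zero.1 h2 with h3 | h3
    · exact absurd (sub_eq_zero.1 h3) hne
    · exact h3
  have hi1 : a⁻¹ ≠ 1 := by simpa using ha1
  have hi3 : a⁻¹ * a⁻¹ * a⁻¹ ≠ 1 := by
    have h : a⁻¹ * a⁻¹ * a⁻¹ = (a ^ 3)⁻¹ := by field_simp
    rw [h]; simpa using ha3
  have e1 := hz v v v a a a hrv hrv hrv (by convert ha3 using 1; ring)
  have e2 := hz v v w a a _ hrv hrv hrw (by convert ha1 using 1; field_simp)
  have e3 := hz v w v a _ a hrv hrw hrv (by convert ha1 using 1; field_simp)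
  have e4 := hz w v v _ a a hrw hrv hrv (by convert ha1 using 1; field_simp)
  have e5 := hz v w w a _ _ hrv hrw hrw (by convert hi1 using 1; field_simp)
  have e6 := hz w v w _ a _ hrw hrv hrw (by convert hi1 using 1; field_simp)
  have e7 := hz w w v _ _ a hrw hrw hrv (by convert hi1 using 1; field_simp)
  have e8 := hz w w w _ _ _ hrw hrw hrw hi3
  have hrep : ∀ x : V, ∃ t u : ℂ, t • v + u • w = x := fun x =>
    Submodule.mem_span_pair.1 (hspan ▸ Submodule.mem_top)
  ext x y z
  obtain ⟨t, u, rfl⟩ := hrep x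
  obtain ⟨t', u', rfl⟩ := hrep y
  obtain ⟨t'', u'', rfl⟩ := hrep z
  simp [e1, e2, e3, e4, e5, e6, e7, e8]
end

section
/- Let G be the symmetric group S₄ on four letters and let W₁, W₂, W₃ be irreducible complex representations of G, each of dimension 2 or 3. If the dimension triple (dim W₁, dim W₂, dim W₃) is not equal to (2, 2, 3) up to permutation, then there exists a nonzero G-invariant trilinear form on W₁ × W₂ × W₃. -/
/-- index of the conjugacy class -/
def clsIdx (g : Equiv.Perm (Fin 4)) : Fin 5 :=
  if g = 1 then 0 else if g * g = 1 then (if Equiv.Perm.sign g = -1 then 1 else 2)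
  else if g * g * g = 1 then 3 else 4

/-- class representatives -/
def clsRep : Fin 5 → Equiv.Perm (Fin 4) :=
  ![1, Equiv.swap 0 1, Equiv.swap 0 1 * Equiv.swap 2 3, Equiv.swap 0 1 * Equiv.swap 1 2,
    Equiv.swap 0 1 * Equiv.swap 1 2 * Equiv.swap 2 3]

theorem cls_conj : ∀ g : Equiv.Perm (Fin 4), ∃ h, g = h * clsRep (clsIdx g) * h⁻¹ := by
  decide +kernel

theorem cls_inv : ∀ g : Equiv.Perm (Fin 4), clsIdx g⁻¹ = clsIdx g := by
  decide +kernel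

theorem sum_cls (F : Fin 5 → ℂ) (p : Equiv.Perm (Fin 4) → Prop) [DecidablePred p] :
    ∑ g : Equiv.Perm (Fin 4), (if p g then F (clsIdx g) else 0) =
      ∑ i : Fin 5, ((Finset.univ.filter (fun g => p g ∧ clsIdx g = i)).card : ℂ) * F i := by
  have h : ∀ g : Equiv.Perm (Fin 4), (if p g then F (clsIdx g) else 0) =
      ∑ i : Fin 5, if p g ∧ clsIdx g = i then F i else 0 := by
    intro g
    by_cases hp : p g <;> simp [hp]
  simp_rw [h]
  rw [Finset.sum_comm]
  refine Finset.sum_congr rfl fun i _ => ?_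
  rw [← Finset.sum_filter, Finset.sum_const, nsmul_eq_mul]

section
variable {V : Type*} [AddCommGroup V] [Module ℂ V] [FiniteDimensional ℂ V]

theorem char_cls (ρ : Representation ℂ (Equiv.Perm (Fin 4)) V) (g : Equiv.Perm (Fin 4)) :
    ρ.character g = ρ.character (clsRep (clsIdx g)) := by
  obtain ⟨h, hh⟩ := cls_conj g
  conv_lhs => rw [hh]
  rw [Representation.char_conj]

theorem sum_subgroup (ρ : Representation ℂ (Equiv.Perm (Fin 4)) V)
    (H : Subgroup (Equiv.Perm (Fin 4))) [DecidablePred (· ∈ H)] :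
    ∃ n : ℕ, ∑ i : Fin 5, ((Finset.univ.filter (fun g => g ∈ H ∧ clsIdx g = i)).card : ℂ) *
      ρ.character (clsRep i) = (Fintype.card H : ℂ) * n := by
  have hc : (Nat.card H : ℂ) ≠ 0 := by
    exact_mod_cast Nat.card_pos.ne'
  let _ : Invertible (Nat.card H : ℂ) := invertibleOfNonzero hc
  let σ : Representation ℂ H V := ρ.comp H.subtype
  refine ⟨Module.finrank ℂ σ.invariants, ?_⟩
  rw [← Representation.card_inv_mul_sum_char_eq_finrank σ, ← Nat.card_eq_fintype_card,
    mul_inv_cancel_left₀ hc, ← sum_cls (fun i => ρ.character (clsRep i)), ← Finset.sum_filter]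
  rw [Finset.sum_subtype (p := fun g => g ∈ H) _ (by simp)]
  refine Finset.sum_congr rfl fun g _ => ?_
  rw [← char_cls]
  rfl

theorem sum_all (ρ : Representation ℂ (Equiv.Perm (Fin 4)) V) :
    ∑ i : Fin 5, ((Finset.univ.filter (fun g => True ∧ clsIdx g = i)).card : ℂ) *
      ρ.character (clsRep i) = 24 * (Module.finrank ℂ ρ.invariants : ℂ) := by
  have h24 : (Nat.card (Equiv.Perm (Fin 4)) : ℂ) = 24 := by
    rw [Nat.card_eq_fintype_card, Fintype.card_perm]; norm_num [Nat.factorial]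
  have hc : (Nat.card (Equiv.Perm (Fin 4)) : ℂ) ≠ 0 := by rw [h24]; norm_num
  let _ : Invertible (Nat.card (Equiv.Perm (Fin 4)) : ℂ) := invertibleOfNonzero hc
  rw [← Representation.card_inv_mul_sum_char_eq_finrank ρ, h24,
    mul_inv_cancel_left₀ (by norm_num), ← sum_cls (fun i => ρ.character (clsRep i))]
  refine Finset.sum_congr rfl fun g _ => ?_
  rw [← char_cls, if_pos trivial]

/-- twist by a character -/
def twist (ρ : Representation ℂ (Equiv.Perm (Fin 4)) V) :
    Representation ℂ (Equiv.Perm (Fin 4)) V where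
  toFun g := ((Equiv.Perm.sign g : ℤ) : ℂ) • ρ g
  map_one' := by simp
  map_mul' g h := by
    ext v
    simp [smul_smul, mul_comm]

theorem invts_zero (ρ : Representation ℂ (Equiv.Perm (Fin 4)) V) (h : IsIrreducibleRep ρ)
    (d : Module.finrank ℂ V ≠ 1) : Module.finrank ℂ ρ.invariants = 0 := by
  obtain ⟨⟨v, hv⟩, hi⟩ := h
  rcases hi ρ.invariants (fun g v hv => by
    rw [Representation.mem_invariants] at hv; rw [hv g, Representation.mem_invariants]; exact hv)
    with h0 | h0
  · rw [h0]; simp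
  · exfalso
    rcases hi (Submodule.span ℂ {v}) (fun g w hw => by
      have : w ∈ ρ.invariants := by rw [h0]; trivial
      rw [Representation.mem_invariants] at this
      rwa [this g]) with h1 | h1
    · simp [hv] at h1
    · apply d
      rw [← finrank_top ℂ V, ← h1, finrank_span_singleton hv]

theorem twist_irr (ρ : Representation ℂ (Equiv.Perm (Fin 4)) V) (h : IsIrreducibleRep ρ) :
    IsIrreducibleRep (twist ρ) := by
  refine ⟨h.1, fun p hp => h.2 p fun g v hv => ?_⟩
  have h1 := p.smul_mem ((Equiv.Perm.sign g : ℤ) : ℂ) (hp g v hv)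
  have h2 : ((Equiv.Perm.sign g : ℤ) : ℂ) * ((Equiv.Perm.sign g : ℤ) : ℂ) = 1 := by
    rcases Int.units_eq_one_or (Equiv.Perm.sign g) with h | h <;> simp [h]
  simpa [twist, smul_smul, h2] using h1

theorem twist_char (ρ : Representation ℂ (Equiv.Perm (Fin 4)) V) (g : Equiv.Perm (Fin 4)) :
    (twist ρ).character g = ((Equiv.Perm.sign g : ℤ) : ℂ) * ρ.character g := by
  simp [twist, Representation.character]

theorem card_all : (fun i : Fin 5 => (Finset.univ.filter
    (fun g : Equiv.Perm (Fin 4) => True ∧ clsIdx g = i)).card) = ![1, 6, 3, 8, 6] := by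
  decide +kernel

/-- point stabilizer -/
def subS3 : Subgroup (Equiv.Perm (Fin 4)) := MulAction.stabilizer _ (3 : Fin 4)

/-- dihedral subgroup -/
def subD4 : Subgroup (Equiv.Perm (Fin 4)) := Subgroup.centralizer {clsRep 2}

instance : DecidablePred (· ∈ subS3) := fun g => decidable_of_iff (g 3 = 3) Iff.rfl
instance : DecidablePred (· ∈ subD4) := fun g =>
  decidable_of_iff (clsRep 2 * g = g * clsRep 2) (by
    simp [subD4, Subgroup.mem_centralizer_iff])

theorem card_S3 : (fun i : Fin 5 => (Finset.univ.filter
    (fun g : Equiv.Perm (Fin 4) => g ∈ subS3 ∧ clsIdx g = i)).card) = ![1, 3, 0, 2, 0] := by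
  decide +kernel

theorem card_D4 : (fun i : Fin 5 => (Finset.univ.filter
    (fun g : Equiv.Perm (Fin 4) => g ∈ subD4 ∧ clsIdx g = i)).card) = ![1, 2, 3, 0, 2] := by
  decide +kernel

theorem card_S3' : Fintype.card subS3 = 6 := by decide +kernel
theorem card_D4' : Fintype.card subD4 = 8 := by decide +kernel

theorem sign_rep : (fun i => ((Equiv.Perm.sign (clsRep i) : ℤ))) = ![1, -1, 1, 1, -1] := by
  decide +kernel

theorem char_table (ρ : Representation ℂ (Equiv.Perm (Fin 4)) V) (h : IsIrreducibleRep ρ)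
    (d : Module.finrank ℂ V = 2 ∨ Module.finrank ℂ V = 3) :
    (Module.finrank ℂ V = 2 ∧ (fun i => ρ.character (clsRep i)) = ![2, 0, 2, -1, 0]) ∨
    (Module.finrank ℂ V = 3 ∧ ∃ s : ℂ, (s = 1 ∨ s = -1) ∧
      (fun i => ρ.character (clsRep i)) = ![3, s, -1, 0, -s]) := by
  have d1 : Module.finrank ℂ V ≠ 1 := by omega
  have e1 := sum_all ρ
  have e2 := sum_all (twist ρ)
  rw [invts_zero _ h d1] at e1
  rw [invts_zero _ (twist_irr _ h) d1] at e2
  obtain ⟨n1, e3⟩ := sum_subgroup ρ subS3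
  obtain ⟨n2, e4⟩ := sum_subgroup (twist ρ) subS3
  obtain ⟨n3, e5⟩ := sum_subgroup ρ subD4
  have ca := congrFun card_all
  have cs := congrFun card_S3
  have cd := congrFun card_D4
  have sr := congrFun sign_rep
  have h0 : ρ.character (clsRep 0) = Module.finrank ℂ V := ρ.char_one
  simp only [card_S3', card_D4', twist_char, ca, cs, cd, sr, Fin.sum_univ_five] at *
  simp only [Matrix.cons_val, h0] at e1 e2 e3 e4 e5
  push_cast at e1 e2 e3 e4 e5
  have key : (3 * (n1 + n2) + 2 * n3 : ℂ) = Module.finrank ℂ V := by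
    linear_combination (-1/2 : ℂ) * (e3 + e4) - (1/4 : ℂ) * e5 + (1/8 : ℂ) * (e1 + e2)
      + (1/24 : ℂ) * (e1 - e2)
  have key' : 3 * (n1 + n2) + 2 * n3 = Module.finrank ℂ V := by exact_mod_cast key
  have hc : ρ.character (clsRep 3) = -n3 := by
    linear_combination (1/16 : ℂ) * (e1 + e2) - (1/8 : ℂ) * e5 + (1/48 : ℂ) * (e1 - e2)
  have ha : ρ.character (clsRep 1) = n1 - n2 := by
    linear_combination (1/6 : ℂ) * (e3 - e4)
  have he : ρ.character (clsRep 4) = -(n1 - n2) := by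
    linear_combination (1/12 : ℂ) * (e1 - e2) - (1/6 : ℂ) * (e3 - e4)
  have hb : ρ.character (clsRep 2) = (8 * n3 - Module.finrank ℂ V) / 3 := by
    linear_combination (1/3 : ℂ) * e5 - (1/18 : ℂ) * (e1 - e2)
  rcases d with d | d
  · left
    obtain ⟨rfl, rfl, rfl⟩ : n1 = 0 ∧ n2 = 0 ∧ n3 = 1 := by omega
    refine ⟨d, ?_⟩
    rw [d] at hb h0
    funext i
    fin_cases i <;> simp [h0, ha, hb, hc, he]
    norm_num
  · right
    refine ⟨d, n1 - n2, ?_⟩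
    rw [d] at hb h0
    obtain ⟨rfl, rfl, rfl⟩ | ⟨rfl, rfl, rfl⟩ : (n1 = 1 ∧ n2 = 0 ∧ n3 = 0) ∨
      (n1 = 0 ∧ n2 = 1 ∧ n3 = 0) := by omega
    all_goals
      refine ⟨by simp, ?_⟩
      funext i
      fin_cases i <;> simp [h0, ha, hb, hc, he]

end

/-- Let `G = S₄` and let `W₁, W₂, W₃` be irreducible complex
representations of `G` of dimension `2` or `3`.  If the dimension triple is not
`(2, 2, 3)` up to permutation, then there is a nonzero `G`-invariant trilinear
form on `W₁ × W₂ × W₃`. -/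
theorem stmt4 {V₁ V₂ V₃ : Type*}
    [AddCommGroup V₁] [Module ℂ V₁] [AddCommGroup V₂] [Module ℂ V₂]
    [AddCommGroup V₃] [Module ℂ V₃]
    (ρ₁ : Representation ℂ (Equiv.Perm (Fin 4)) V₁)
    (ρ₂ : Representation ℂ (Equiv.Perm (Fin 4)) V₂)
    (ρ₃ : Representation ℂ (Equiv.Perm (Fin 4)) V₃)
    (h₁ : IsIrreducibleRep ρ₁) (h₂ : IsIrreducibleRep ρ₂) (h₃ : IsIrreducibleRep ρ₃)
    (d₁ : Module.finrank ℂ V₁ = 2 ∨ Module.finrank ℂ V₁ = 3)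
    (d₂ : Module.finrank ℂ V₂ = 2 ∨ Module.finrank ℂ V₂ = 3)
    (d₃ : Module.finrank ℂ V₃ = 2 ∨ Module.finrank ℂ V₃ = 3)
    (hne : ({Module.finrank ℂ V₁, Module.finrank ℂ V₂, Module.finrank ℂ V₃} : Multiset ℕ)
      ≠ ({2, 2, 3} : Multiset ℕ)) :
    ∃ Λ : V₁ →ₗ[ℂ] V₂ →ₗ[ℂ] V₃ →ₗ[ℂ] ℂ, Λ ≠ 0 ∧
      ∀ (g : Equiv.Perm (Fin 4)) (v₁ : V₁) (v₂ : V₂) (v₃ : V₃),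
        Λ (ρ₁ g v₁) (ρ₂ g v₂) (ρ₃ g v₃) = Λ v₁ v₂ v₃ := by
  have : FiniteDimensional ℂ V₁ := Module.finite_of_finrank_pos (by omega)
  have : FiniteDimensional ℂ V₂ := Module.finite_of_finrank_pos (by omega)
  have : FiniteDimensional ℂ V₃ := Module.finite_of_finrank_pos (by omega)
  let σ := Representation.linHom ρ₁ (Representation.linHom ρ₂ ρ₃.dual)
  have hσ : ∀ i, Representation.character (V := V₁ →ₗ[ℂ] V₂ →ₗ[ℂ] Module.Dual ℂ V₃) σ (clsRep i) = ρ₁.character (clsRep i) *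
      (ρ₂.character (clsRep i) * ρ₃.character (clsRep i)) := by
    intro i
    have hinv : ∀ g : Equiv.Perm (Fin 4), clsRep (clsIdx g⁻¹) = clsRep (clsIdx g) :=
      fun g => by rw [cls_inv]
    rw [Representation.char_linHom, Representation.char_linHom, Representation.char_dual,
      char_cls ρ₁ (clsRep i)⁻¹, char_cls ρ₂ (clsRep i)⁻¹, char_cls ρ₃ (clsRep i)⁻¹, hinv,
      ← char_cls, ← char_cls, ← char_cls]
  have hs := sum_all (V := V₁ →ₗ[ℂ] V₂ →ₗ[ℂ] Module.Dual ℂ V₃) σ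
  have ca := congrFun card_all
  simp only [ca, hσ, Fin.sum_univ_five] at hs
  have hfin : Module.finrank ℂ (Representation.invariants (k := ℂ) (G := Equiv.Perm (Fin 4))
      (V := V₁ →ₗ[ℂ] V₂ →ₗ[ℂ] Module.Dual ℂ V₃) σ) ≠ 0 := by
    intro h0
    rw [h0] at hs
    rcases char_table ρ₁ h₁ d₁ with ⟨e₁, c₁⟩ | ⟨e₁, s₁, t₁, c₁⟩ <;>
    rcases char_table ρ₂ h₂ d₂ with ⟨e₂, c₂⟩ | ⟨e₂, s₂, t₂, c₂⟩ <;>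
    rcases char_table ρ₃ h₃ d₃ with ⟨e₃, c₃⟩ | ⟨e₃, s₃, t₃, c₃⟩ <;>
    rw [e₁, e₂, e₃] at hne <;>
    first
    | exact hne (by decide)
    | skip
    all_goals
      have k₁ := congrFun c₁
      have k₂ := congrFun c₂
      have k₃ := congrFun c₃
      simp only [k₁, k₂, k₃, Matrix.cons_val] at hs
      first
      | (ring_nf at hs; norm_num at hs; done)
      | (rcases t₁ with rfl | rfl <;> rcases t₂ with rfl | rfl <;> rcases t₃ with rfl | rfl <;>
          norm_num at hs)
  have hbot : Representation.invariants (k := ℂ) (G := Equiv.Perm (Fin 4))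
      (V := V₁ →ₗ[ℂ] V₂ →ₗ[ℂ] Module.Dual ℂ V₃) σ ≠ ⊥ := by
    intro h
    apply hfin
    rw [h, finrank_bot]
  obtain ⟨Λ, hΛ, hne0⟩ := Submodule.exists_mem_ne_zero_of_ne_bot hbot
  refine ⟨Λ, hne0, fun g v₁ v₂ v₃ => ?_⟩
  rw [Representation.mem_invariants] at hΛ
  have h := LinearMap.congr_fun (LinearMap.congr_fun (LinearMap.congr_fun (hΛ g) (ρ₁ g v₁))
    (ρ₂ g v₂)) (ρ₃ g v₃)
  rw [← h]
  simp [σ, Representation.linHom_apply, Representation.dual_apply, Module.Dual.transpose_apply]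
end

section
/- Let F be a totally real number field whose ideal class group is trivial, with ring of integers 𝒪. Let a ∈ F^× be totally positive (that is, φ(a) > 0 for every real embedding φ : F → ℝ) and suppose that a has even valuation at every finite place of F (equivalently, the principal fractional ideal generated by a is the square of a fractional ideal of 𝒪). Then there exist a totally positive unit u ∈ 𝒪^× and an element c ∈ F^× such that a = u·c². -/
open NumberField

/-- Let `F` be a totally real number field with trivial ideal class
group, and let `a ∈ F^×` be totally positive such that the principal fractional
ideal generated by `a` is the square of a fractional ideal (equivalently, `a` has
even valuation at every finite place).  Then `a = u · c²` for some totally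
positive unit `u` of the ring of integers and some `c ∈ F^×`. -/
theorem stmt5 (F : Type*) [Field F] [NumberField F]
    (htotreal : ∀ v : InfinitePlace F, v.IsReal)
    (hclass : Subsingleton (ClassGroup (𝓞 F)))
    (a : F) (ha : a ≠ 0)
    (hpos : ∀ φ : F →+* ℝ, 0 < φ a)
    (hsq : ∃ I : FractionalIdeal (nonZeroDivisors (𝓞 F)) F,
      I ^ 2 = FractionalIdeal.spanSingleton (nonZeroDivisors (𝓞 F)) a) :
    ∃ (u : (𝓞 F)ˣ) (c : F), c ≠ 0 ∧
      (∀ φ : F →+* ℝ, 0 < φ ((u : 𝓞 F) : F)) ∧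
      a = ((u : 𝓞 F) : F) * c ^ 2 := by
  have hP : IsPrincipalIdealRing (𝓞 F) := by
    rw [← NumberField.classNumber_eq_one_iff, NumberField.classNumber, Fintype.card_eq_one_iff]
    exact ⟨1, fun y => Subsingleton.elim _ _⟩
  obtain ⟨I, hI⟩ := hsq
  obtain ⟨c, rfl⟩ := (FractionalIdeal.isPrincipal_iff I).1 (FractionalIdeal.isPrincipal I)
  rw [FractionalIdeal.spanSingleton_pow, FractionalIdeal.spanSingleton_eq_spanSingleton] at hI
  obtain ⟨u, hu⟩ := hI
  have h : a = ((u : 𝓞 F) : F) * c ^ 2 := by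
    rw [← hu, Units.smul_def, Algebra.smul_def]
  have hc : c ≠ 0 := by
    rintro rfl
    exact ha (by simp [h])
  refine ⟨u, c, hc, fun φ => ?_, h⟩
  have h1 := hpos φ
  rw [h, map_mul, map_pow] at h1
  exact pos_of_mul_pos_left h1 (sq_nonneg _)
end

section
/- Inside GL₂(ℚ₂), let Γ₀ be the set of 2×2 matrices with entries in ℤ₂ whose determinant is a unit of ℤ₂ and whose lower-left entry lies in 2ℤ₂; let g = [[0, 1], [2, 0]]; let 𝒦 be the subgroup of GL₂(ℚ₂) generated by all scalar matrices λ·I (λ ∈ ℚ₂^×) together with Γ₀ and g; and let G be the set of matrices M ∈ Γ₀ such that M₁₂ + M₂₁/2 ∈ 2ℤ₂. Then: (i) G is a subgroup of Γ₀ of index 2; (ii) the subgroup ℚ₂^×·G (scalar matrices times G) is normal in 𝒦; and (iii) the quotient 𝒦/(ℚ₂^×·G) is isomorphic to (ℤ/2)², generated by the classes of the matrices c = [[1, 2], [2, −1]] and g. -/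
open Matrix

noncomputable section

/-- The set `Γ₀ ⊆ GL₂(ℚ₂)` of matrices with entries in `ℤ₂`, determinant a unit of
`ℤ₂`, and lower-left entry in `2ℤ₂`. -/
def gammaZeroSet : Set (GL (Fin 2) ℚ_[2]) :=
  {M | (∀ i j, ‖(M : Matrix (Fin 2) (Fin 2) ℚ_[2]) i j‖ ≤ 1) ∧
    ‖(M : Matrix (Fin 2) (Fin 2) ℚ_[2]).det‖ = 1 ∧
    ‖(M : Matrix (Fin 2) (Fin 2) ℚ_[2]) 1 0‖ ≤ 2⁻¹}

/-- The set `G ⊆ Γ₀` of matrices `M` with `M₁₂ + M₂₁/2 ∈ 2ℤ₂`. -/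
def GSet : Set (GL (Fin 2) ℚ_[2]) :=
  {M | M ∈ gammaZeroSet ∧
    ‖(M : Matrix (Fin 2) (Fin 2) ℚ_[2]) 0 1 +
      (M : Matrix (Fin 2) (Fin 2) ℚ_[2]) 1 0 / 2‖ ≤ 2⁻¹}

/-- The set of scalar matrices `λ·I`, `λ ∈ ℚ₂^×`. -/
def scalarSet : Set (GL (Fin 2) ℚ_[2]) :=
  {M | ∃ lam : ℚ_[2], lam ≠ 0 ∧
    (M : Matrix (Fin 2) (Fin 2) ℚ_[2]) = lam • (1 : Matrix (Fin 2) (Fin 2) ℚ_[2])}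

/-- The element `g = [[0, 1], [2, 0]]` of `GL₂(ℚ₂)`. -/
def gElt : GL (Fin 2) ℚ_[2] :=
  Matrix.GeneralLinearGroup.mkOfDetNeZero !![0, 1; 2, 0] (by
    rw [Matrix.det_fin_two_of]; norm_num)

/-- The element `c = [[1, 2], [2, -1]]` of `GL₂(ℚ₂)`. -/
def cElt : GL (Fin 2) ℚ_[2] :=
  Matrix.GeneralLinearGroup.mkOfDetNeZero !![1, 2; 2, -1] (by
    rw [Matrix.det_fin_two_of]; norm_num)

/-- The group `𝒦` generated by the scalar matrices, `Γ₀` and `g`. -/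
def KSub : Subgroup (GL (Fin 2) ℚ_[2]) :=
  Subgroup.closure (scalarSet ∪ gammaZeroSet ∪ {gElt})

/-- The group `ℚ₂^× · G` generated by the scalar matrices and `G`. -/
def NSub : Subgroup (GL (Fin 2) ℚ_[2]) :=
  Subgroup.closure (scalarSet ∪ GSet)

/-- Integral description of elements of `Γ₀` with class `x`. -/
def PP (M : GL (Fin 2) ℚ_[2]) (x : ZMod 2) : Prop :=
  ∃ a b c d : ℤ_[2], PadicInt.toZMod a = 1 ∧ PadicInt.toZMod d = 1 ∧
    PadicInt.toZMod b + PadicInt.toZMod c = x ∧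
    (M : Matrix (Fin 2) (Fin 2) ℚ_[2]) = !![(a : ℚ_[2]), b; 2 * c, d]

theorem zmod_zero_iff (x : ℤ_[2]) : PadicInt.toZMod x = 0 ↔ ‖(x : ℚ_[2])‖ < 1 := by
  rw [← RingHom.mem_ker, PadicInt.ker_toZMod, IsLocalRing.mem_maximalIdeal, mem_nonunits_iff,
    PadicInt.isUnit_iff, PadicInt.norm_def]
  have := x.norm_le_one
  rw [PadicInt.norm_def] at this
  constructor
  · intro h; exact lt_of_le_of_ne this h
  · intro h; exact h.ne

theorem zmod_one_iff (x : ℤ_[2]) : PadicInt.toZMod x = 1 ↔ ‖(x : ℚ_[2])‖ = 1 := by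
  have h2 : ∀ y : ZMod 2, y = 1 ↔ ¬ y = 0 := by decide
  rw [h2, zmod_zero_iff]
  have := x.norm_le_one
  rw [PadicInt.norm_def] at this
  constructor
  · intro h; linarith
  · intro h; linarith

theorem le_half_iff (x : ℚ_[2]) : ‖x‖ ≤ 2⁻¹ ↔ ‖x‖ < 1 := by
  constructor
  · intro h; linarith
  · intro h
    have := Padic.norm_le_pow_iff_norm_lt_pow_add_one x (-1)
    norm_num at this
    rw [← one_div, this]; exact h

theorem norm_two : ‖(2 : ℚ_[2])‖ = 2⁻¹ := by
  have := Padic.norm_p (p := 2)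
  simpa using this

theorem toZ_two : PadicInt.toZMod (2 : ℤ_[2]) = (0 : ZMod 2) := by
  rw [map_ofNat]; decide

theorem coe_two : ((2 : ℤ_[2]) : ℚ_[2]) = 2 := rfl

theorem gamma_iff (M : GL (Fin 2) ℚ_[2]) : M ∈ gammaZeroSet ↔ ∃ x, PP M x := by
  constructor
  · rintro ⟨h1, h2, h3⟩
    have hc : ‖(M : Matrix (Fin 2) (Fin 2) ℚ_[2]) 1 0 / 2‖ ≤ 1 := by
      rw [norm_div, norm_two]; rw [div_le_iff₀ (by norm_num)]; linarith
    obtain ⟨a, ha⟩ : ∃ a : ℤ_[2], (a : ℚ_[2]) = (M : Matrix (Fin 2) (Fin 2) ℚ_[2]) 0 0 := ⟨⟨_, h1 0 0⟩, rfl⟩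
    obtain ⟨b, hb⟩ : ∃ a : ℤ_[2], (a : ℚ_[2]) = (M : Matrix (Fin 2) (Fin 2) ℚ_[2]) 0 1 := ⟨⟨_, h1 0 1⟩, rfl⟩
    obtain ⟨c, hc⟩ : ∃ a : ℤ_[2], (a : ℚ_[2]) = (M : Matrix (Fin 2) (Fin 2) ℚ_[2]) 1 0 / 2 := ⟨⟨_, hc⟩, rfl⟩
    obtain ⟨d, hd⟩ : ∃ a : ℤ_[2], (a : ℚ_[2]) = (M : Matrix (Fin 2) (Fin 2) ℚ_[2]) 1 1 := ⟨⟨_, h1 1 1⟩, rfl⟩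
    have hc' : (M : Matrix (Fin 2) (Fin 2) ℚ_[2]) 1 0 = 2 * c := by rw [hc]; ring
    have hdet : PadicInt.toZMod (a * d - b * (2 * c)) = (1 : ZMod 2) := by
      rw [Matrix.det_fin_two, ← ha, ← hb, hc', ← hd] at h2
      rw [zmod_one_iff]
      push_cast; exact h2
    simp only [map_sub, map_mul, toZ_two, zero_mul, mul_zero, sub_zero] at hdet
    have key : ∀ x y : ZMod 2, x * y = 1 → x = 1 ∧ y = 1 := by decide
    obtain ⟨h5, h6⟩ := key _ _ hdet
    refine ⟨_, a, b, c, d, h5, h6, rfl, ?_⟩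
    ext i j
    fin_cases i <;> fin_cases j <;> simp [ha, hb, hc', hd]
  · rintro ⟨x, a, b, c, d, ha, hd, -, hM⟩
    refine ⟨?_, ?_, ?_⟩
    · rw [hM]
      intro i j
      have h2c : ‖(2 * c : ℚ_[2])‖ ≤ 1 := by
        have := (2 * c).norm_le_one
        rw [PadicInt.norm_def] at this
        push_cast at this; exact this
      fin_cases i <;> fin_cases j
      · exact a.2
      · exact b.2
      · exact h2c
      · exact d.2
    · have : PadicInt.toZMod (a * d - b * (2 * c)) = (1 : ZMod 2) := by
        simp [toZ_two, ha, hd]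
      rw [zmod_one_iff] at this
      rw [hM, Matrix.det_fin_two_of]
      push_cast at this; exact this
    · rw [hM]
      have : PadicInt.toZMod (2 * c) = (0 : ZMod 2) := by simp [toZ_two]
      rw [zmod_zero_iff] at this
      rw [le_half_iff]
      push_cast at this; exact this

theorem PP_G {M : GL (Fin 2) ℚ_[2]} {x : ZMod 2} (h : PP M x) : M ∈ GSet ↔ x = 0 := by
  have hg := (gamma_iff M).2 ⟨x, h⟩
  obtain ⟨a, b, c, d, ha, hd, hx, hM⟩ := h
  have : M ∈ GSet ↔ ‖(M : Matrix (Fin 2) (Fin 2) ℚ_[2]) 0 1 +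
      (M : Matrix (Fin 2) (Fin 2) ℚ_[2]) 1 0 / 2‖ ≤ 2⁻¹ := ⟨fun h => h.2, fun h => ⟨hg, h⟩⟩
  rw [this, le_half_iff, ← hx, ← map_add, zmod_zero_iff, hM]
  simp

theorem G_iff (M : GL (Fin 2) ℚ_[2]) : M ∈ GSet ↔ PP M 0 := by
  constructor
  · intro h
    obtain ⟨x, hx⟩ := (gamma_iff M).1 h.1
    have := (PP_G hx).1 h
    exact this ▸ hx
  · intro h; exact (PP_G h).2 rfl

theorem PP_one : PP 1 0 :=
  ⟨1, 0, 0, 1, by simp, by simp, by simp, by ext i j; fin_cases i <;> fin_cases j <;> simp⟩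

theorem PP_mul {M N : GL (Fin 2) ℚ_[2]} {x y : ZMod 2} (h : PP M x) (k : PP N y) :
    PP (M * N) (x + y) := by
  obtain ⟨a, b, c, d, ha, hd, hx, hM⟩ := h
  obtain ⟨a', b', c', d', ha', hd', hx', hM'⟩ := k
  refine ⟨a * a' + 2 * b * c', a * b' + b * d', c * a' + d * c', 2 * c * b' + d * d', ?_, ?_, ?_, ?_⟩
  · simp [toZ_two, ha, ha']
  · simp [toZ_two, hd, hd']
  · simp [ha, hd, ha', hd', ← hx, ← hx']; ring
  · rw [Units.val_mul, hM, hM']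
    ext i j
    fin_cases i <;> fin_cases j <;> simp [Matrix.mul_apply, Fin.sum_univ_two, coe_two] <;> ring

theorem PP_inv {M : GL (Fin 2) ℚ_[2]} {x : ZMod 2} (h : PP M x) : PP M⁻¹ x := by
  obtain ⟨a, b, c, d, ha, hd, hx, hM⟩ := h
  have hu : IsUnit (a * d - 2 * b * c) := by
    rw [PadicInt.isUnit_iff, PadicInt.norm_def, ← zmod_one_iff]
    simp [toZ_two, ha, hd]
  obtain ⟨u, hu⟩ := hu.exists_right_inv
  have hu1 : PadicInt.toZMod u = (1 : ZMod 2) := by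
    have := congrArg PadicInt.toZMod hu
    simpa [toZ_two, ha, hd] using this
  have huq : ((a : ℚ_[2]) * d - 2 * b * c) * u = 1 := by
    have := congrArg (fun z : ℤ_[2] => (z : ℚ_[2])) hu
    push_cast at this; exact this
  refine ⟨u * d, - u * b, - u * c, u * a, by simp [hu1, hd], by simp [hu1, ha], ?_, ?_⟩
  · simp [hu1, ← hx]
  · rw [Matrix.coe_units_inv]
    apply Matrix.inv_eq_right_inv
    rw [hM]
    ext i j
    fin_cases i <;> fin_cases j <;> simp [Matrix.mul_apply, Fin.sum_univ_two] <;>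
      first | ring1 | linear_combination huq

theorem sc_comm {s : GL (Fin 2) ℚ_[2]} (hs : s ∈ scalarSet) (M : GL (Fin 2) ℚ_[2]) :
    M * s = s * M := by
  obtain ⟨l, -, h⟩ := hs
  apply Units.ext
  simp [h]

theorem sc_one : (1 : GL (Fin 2) ℚ_[2]) ∈ scalarSet := ⟨1, one_ne_zero, by simp⟩

theorem sc_mul {s t : GL (Fin 2) ℚ_[2]} (hs : s ∈ scalarSet) (ht : t ∈ scalarSet) :
    s * t ∈ scalarSet := by
  obtain ⟨l, hl, h⟩ := hs
  obtain ⟨m, hm, k⟩ := ht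
  exact ⟨l * m, mul_ne_zero hl hm, by simp [h, k, smul_smul, mul_comm]⟩

theorem sc_inv {s : GL (Fin 2) ℚ_[2]} (hs : s ∈ scalarSet) : s⁻¹ ∈ scalarSet := by
  obtain ⟨l, hl, h⟩ := hs
  refine ⟨l⁻¹, inv_ne_zero hl, ?_⟩
  rw [Matrix.coe_units_inv]
  apply Matrix.inv_eq_right_inv
  simp [h, smul_smul, hl]

theorem g_val : (gElt : Matrix (Fin 2) (Fin 2) ℚ_[2]) = !![0, 1; 2, 0] := rfl

theorem c_val : (cElt : Matrix (Fin 2) (Fin 2) ℚ_[2]) = !![1, 2; 2, -1] := rfl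

theorem g_sq : gElt * gElt ∈ scalarSet := by
  refine ⟨2, two_ne_zero, ?_⟩
  rw [Units.val_mul, g_val]
  ext i j
  fin_cases i <;> fin_cases j <;> simp [Matrix.mul_apply, Fin.sum_univ_two]

theorem PP_c : PP cElt 1 := by
  refine ⟨1, 2, 1, -1, by simp, by simp, by simp [toZ_two], ?_⟩
  rw [c_val]
  ext i j
  fin_cases i <;> fin_cases j <;> simp [coe_two]

theorem g_conj {M : GL (Fin 2) ℚ_[2]} {x : ZMod 2} (h : PP M x) :
    ∃ N, PP N x ∧ gElt * M = N * gElt := by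
  obtain ⟨a, b, c, d, ha, hd, hx, hM⟩ := h
  have hdet : (M : Matrix (Fin 2) (Fin 2) ℚ_[2]).det ≠ 0 := (M.isUnit.map Matrix.detMonoidHom).ne_zero
  rw [hM, Matrix.det_fin_two_of] at hdet
  refine ⟨Matrix.GeneralLinearGroup.mkOfDetNeZero !![(d : ℚ_[2]), c; 2 * b, a] ?_,
    ⟨d, c, b, a, hd, ha, by rw [← hx, add_comm], rfl⟩, ?_⟩
  · rw [Matrix.det_fin_two_of]
    intro h; apply hdet; linear_combination h
  · apply Units.ext
    have hN : ∀ h, ((Matrix.GeneralLinearGroup.mkOfDetNeZero !![(d : ℚ_[2]), c; 2 * b, a] h :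
      GL (Fin 2) ℚ_[2]) : Matrix (Fin 2) (Fin 2) ℚ_[2]) = !![(d : ℚ_[2]), c; 2 * b, a] := fun _ => rfl
    rw [Units.val_mul, Units.val_mul, hN, g_val, hM]
    ext i j
    fin_cases i <;> fin_cases j <;> simp [Matrix.mul_apply, Fin.sum_univ_two, mul_comm]

/-- `g ^ e`. -/
def EE (e : ZMod 2) : GL (Fin 2) ℚ_[2] := if e = 0 then 1 else gElt

theorem EE_zero : EE 0 = 1 := rfl

theorem EE_one : EE 1 = gElt := rfl

theorem zmod_cases (e : ZMod 2) : e = 0 ∨ e = 1 := by revert e; decide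

theorem one_add_one_zmod : (1 : ZMod 2) + 1 = 0 := by decide

theorem EE_mul (e e' : ZMod 2) : ∃ s ∈ scalarSet, EE e * EE e' = s * EE (e + e') := by
  rcases zmod_cases e with rfl | rfl
  · exact ⟨1, sc_one, by rw [EE_zero, zero_add]⟩
  rcases zmod_cases e' with rfl | rfl
  · exact ⟨1, sc_one, by simp [EE_zero]⟩
  · exact ⟨_, g_sq, by rw [one_add_one_zmod, EE_zero, EE_one, mul_one]⟩

theorem EE_inv (e : ZMod 2) : ∃ s ∈ scalarSet, (EE e)⁻¹ = s * EE e := by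
  rcases zmod_cases e with rfl | rfl
  · exact ⟨1, sc_one, by simp [EE_zero]⟩
  · exact ⟨_, sc_inv g_sq, by rw [EE_one]; group⟩

theorem EE_conj (e : ZMod 2) {M : GL (Fin 2) ℚ_[2]} {x : ZMod 2} (h : PP M x) :
    ∃ N, PP N x ∧ EE e * M = N * EE e := by
  rcases zmod_cases e with rfl | rfl
  · exact ⟨M, h, by simp [EE_zero]⟩
  · exact g_conj h

/-- `M` is a scalar times an element of `Γ₀` of class `x` times `g ^ e`. -/
def RR (M : GL (Fin 2) ℚ_[2]) (p : ZMod 2 × ZMod 2) : Prop :=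
  ∃ s γ, s ∈ scalarSet ∧ PP γ p.1 ∧ M = s * γ * EE p.2

theorem RR_mul {M N : GL (Fin 2) ℚ_[2]} {p q} (h : RR M p) (k : RR N q) : RR (M * N) (p + q) := by
  obtain ⟨s, γ, hs, hγ, rfl⟩ := h
  obtain ⟨t, δ, ht, hδ, rfl⟩ := k
  obtain ⟨δ', hδ', h1⟩ := EE_conj p.2 hδ
  obtain ⟨r, hr, h2⟩ := EE_mul p.2 q.2
  refine ⟨s * t * r, γ * δ', sc_mul (sc_mul hs ht) hr, PP_mul hγ hδ', ?_⟩
  calc s * γ * EE p.2 * (t * δ * EE q.2) = s * (γ * EE p.2 * t) * δ * EE q.2 := by group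
    _ = s * t * γ * (EE p.2 * δ) * EE q.2 := by rw [sc_comm ht]; group
    _ = s * t * γ * δ' * (EE p.2 * EE q.2) := by rw [h1]; group
    _ = s * t * (γ * δ' * r) * EE (p.2 + q.2) := by rw [h2]; group
    _ = _ := by rw [sc_comm hr, Prod.snd_add]; group

theorem RR_inv {M : GL (Fin 2) ℚ_[2]} {p} (h : RR M p) : RR M⁻¹ p := by
  obtain ⟨s, γ, hs, hγ, rfl⟩ := h
  obtain ⟨γ', hγ', h1⟩ := EE_conj p.2 (PP_inv hγ)
  obtain ⟨r, hr, h2⟩ := EE_inv p.2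
  refine ⟨s⁻¹ * r, γ', sc_mul (sc_inv hs) hr, hγ', ?_⟩
  calc (s * γ * EE p.2)⁻¹ = (EE p.2)⁻¹ * γ⁻¹ * s⁻¹ := by group
    _ = s⁻¹ * r * (EE p.2 * γ⁻¹) := by rw [sc_comm (sc_inv hs), h2]; group
    _ = _ := by rw [h1]; group

theorem RR_one {p} (h : RR 1 p) : p = 0 := by
  obtain ⟨s, γ, ⟨l, hl, hs⟩, ⟨a, b, c, d, ha, hd, hx, hM⟩, h⟩ := h
  obtain ⟨x, e⟩ := p
  have h' := congrArg (fun z : GL (Fin 2) ℚ_[2] => (z : Matrix (Fin 2) (Fin 2) ℚ_[2])) h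
  simp only [Units.val_mul, Units.val_one] at h'
  rcases zmod_cases e with rfl | rfl
  · rw [hs, hM, EE_zero] at h'
    have h01 := congrFun (congrFun h' 0) 1
    have h10 := congrFun (congrFun h' 1) 0
    simp [hl] at h01 h10
    simp [h01, h10] at hx
    rw [← hx]; rfl
  · exfalso
    rw [hs, hM, EE_one, g_val] at h'
    have h01 := congrFun (congrFun h' 0) 1
    simp [Matrix.mul_apply, Fin.sum_univ_two, hl] at h01
    simp [h01] at ha

theorem self_add (p : ZMod 2 × ZMod 2) : p + p = 0 := by revert p; decide

theorem RR_unique {M : GL (Fin 2) ℚ_[2]} {p q} (h : RR M p) (k : RR M q) : p = q := by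
  have := RR_mul h (RR_inv k)
  rw [mul_inv_cancel] at this
  have := RR_one this
  calc p = p + (q + q) := by rw [self_add, add_zero]
    _ = (p + q) + q := by rw [add_assoc]
    _ = q := by rw [this, zero_add]

theorem RR_scalar {M : GL (Fin 2) ℚ_[2]} (h : M ∈ scalarSet) : RR M 0 :=
  ⟨M, 1, h, PP_one, by rw [Prod.snd_zero, EE_zero]; group⟩

theorem RR_PP {M : GL (Fin 2) ℚ_[2]} {x} (h : PP M x) : RR M (x, 0) :=
  ⟨1, M, sc_one, h, by rw [EE_zero]; group⟩

theorem RR_g : RR gElt (0, 1) :=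
  ⟨1, 1, sc_one, PP_one, by rw [EE_one]; group⟩

theorem RR_K {M : GL (Fin 2) ℚ_[2]} (h : M ∈ KSub) : ∃ p, RR M p := by
  let D : Subgroup (GL (Fin 2) ℚ_[2]) :=
    { carrier := {M | ∃ p, RR M p}
      mul_mem' := fun ⟨_, h⟩ ⟨_, k⟩ => ⟨_, RR_mul h k⟩
      one_mem' := ⟨_, RR_scalar sc_one⟩
      inv_mem' := fun ⟨_, h⟩ => ⟨_, RR_inv h⟩ }
  have : KSub ≤ D := by
    refine (Subgroup.closure_le D).2 ?_
    rintro M ((h | h) | h)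
    · exact ⟨_, RR_scalar h⟩
    · obtain ⟨x, hx⟩ := (gamma_iff M).1 h
      exact ⟨_, RR_PP hx⟩
    · rw [Set.mem_singleton_iff.1 h]
      exact ⟨_, RR_g⟩
  exact this h

theorem RR_N (M : GL (Fin 2) ℚ_[2]) : M ∈ NSub ↔ RR M 0 := by
  constructor
  · let D : Subgroup (GL (Fin 2) ℚ_[2]) :=
      { carrier := {M | RR M 0}
        mul_mem' := fun h k => by simpa using RR_mul h k
        one_mem' := RR_scalar sc_one
        inv_mem' := fun h => RR_inv h }
    have : NSub ≤ D := by
      refine (Subgroup.closure_le D).2 ?_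
      rintro M (h | h)
      · exact RR_scalar h
      · exact RR_PP ((G_iff M).1 h)
    exact fun h => this h
  · rintro ⟨s, γ, hs, hγ, rfl⟩
    rw [Prod.snd_zero, EE_zero, mul_one]
    exact mul_mem (Subgroup.subset_closure (Or.inl hs))
      (Subgroup.subset_closure (Or.inr ((G_iff γ).2 hγ)))

theorem N_le_K : NSub ≤ KSub := by
  refine (Subgroup.closure_le _).2 ?_
  rintro M (h | h)
  · exact Subgroup.subset_closure (Or.inl (Or.inl h))
  · exact Subgroup.subset_closure (Or.inl (Or.inr h.1))

theorem c_mem : cElt ∈ KSub :=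
  Subgroup.subset_closure (Or.inl (Or.inr ((gamma_iff _).2 ⟨_, PP_c⟩)))

theorem g_mem : gElt ∈ KSub := Subgroup.subset_closure (Or.inr rfl)

theorem exists_hom : ∃ f : KSub →* Multiplicative (ZMod 2) × Multiplicative (ZMod 2),
    ∀ (M : KSub) (p : ZMod 2 × ZMod 2), RR M p →
      f M = (Multiplicative.ofAdd p.1, Multiplicative.ofAdd p.2) := by
  choose F hF using fun M : KSub => RR_K M.2
  refine ⟨MonoidHom.mk' (fun M => (Multiplicative.ofAdd (F M).1, Multiplicative.ofAdd (F M).2)) ?_, ?_⟩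
  · intro M N
    have := RR_unique (hF (M * N)) (RR_mul (hF M) (hF N))
    simp [this]
  · intro M p h
    simp [RR_unique (hF M) h]

theorem partOne : ∃ Γ : Subgroup (GL (Fin 2) ℚ_[2]), (Γ : Set (GL (Fin 2) ℚ_[2])) = gammaZeroSet ∧
      ∃ H : Subgroup (GL (Fin 2) ℚ_[2]), (H : Set (GL (Fin 2) ℚ_[2])) = GSet ∧
        H ≤ Γ ∧ (H.subgroupOf Γ).index = 2 := by
  let Γ : Subgroup (GL (Fin 2) ℚ_[2]) :=
    { carrier := {M | ∃ x, PP M x}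
      mul_mem' := fun ⟨_, h⟩ ⟨_, k⟩ => ⟨_, PP_mul h k⟩
      one_mem' := ⟨_, PP_one⟩
      inv_mem' := fun ⟨_, h⟩ => ⟨_, PP_inv h⟩ }
  let H : Subgroup (GL (Fin 2) ℚ_[2]) :=
    { carrier := {M | PP M 0}
      mul_mem' := fun h k => by simpa using PP_mul h k
      one_mem' := PP_one
      inv_mem' := fun h => PP_inv h }
  refine ⟨Γ, Set.ext fun M => (gamma_iff M).symm, H, Set.ext fun M => (G_iff M).symm,
    fun M h => ⟨_, h⟩, ?_⟩
  rw [Subgroup.index_eq_two_iff]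
  refine ⟨⟨cElt, ⟨_, PP_c⟩⟩, ?_⟩
  rintro ⟨M, x, hx⟩
  have h1 : M ∈ GSet ↔ x = 0 := PP_G hx
  have h2 : M * cElt ∈ GSet ↔ x + 1 = 0 := PP_G (PP_mul hx PP_c)
  rw [G_iff] at h1 h2
  have h3 : Xor (x + 1 = 0) (x = 0) := by
    clear h1 h2 hx
    rcases zmod_cases x with rfl | rfl
    · exact Or.inr ⟨rfl, by decide⟩
    · exact Or.inl ⟨by decide, by decide⟩
  rw [← h1, ← h2] at h3
  exact h3

/-- Inside `GL₂(ℚ₂)`: (i) `G` is a subgroup of `Γ₀` of index `2`;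
(ii) `ℚ₂^× · G` is a normal subgroup of `𝒦 = ⟨ℚ₂^×, Γ₀, g⟩`; and (iii) the
quotient `𝒦/(ℚ₂^× · G)` is isomorphic to `(ℤ/2)²`, generated by the classes of
`c = [[1, 2], [2, -1]]` and `g = [[0, 1], [2, 0]]`. -/
theorem stmt9 :
    (∃ Γ : Subgroup (GL (Fin 2) ℚ_[2]), (Γ : Set (GL (Fin 2) ℚ_[2])) = gammaZeroSet ∧
      ∃ H : Subgroup (GL (Fin 2) ℚ_[2]), (H : Set (GL (Fin 2) ℚ_[2])) = GSet ∧
        H ≤ Γ ∧ (H.subgroupOf Γ).index = 2) ∧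
    (NSub ≤ KSub ∧ (NSub.subgroupOf KSub).Normal) ∧
    (∃ (hc : cElt ∈ KSub) (hg : gElt ∈ KSub)
      (f : KSub →* Multiplicative (ZMod 2) × Multiplicative (ZMod 2)),
        Function.Surjective f ∧ f.ker = NSub.subgroupOf KSub ∧
        Subgroup.closure {f ⟨cElt, hc⟩, f ⟨gElt, hg⟩} = ⊤) := by
  obtain ⟨f, hf⟩ := exists_hom
  have hker : f.ker = NSub.subgroupOf KSub := by
    ext M
    obtain ⟨p, hp⟩ := RR_K M.2
    rw [MonoidHom.mem_ker, Subgroup.mem_subgroupOf, RR_N, hf M p hp]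
    constructor
    · intro h
      have : p = 0 := by
        simpa [Prod.ext_iff] using h
      exact this ▸ hp
    · intro h
      rw [RR_unique hp h]; rfl
  have hcv : f ⟨cElt, c_mem⟩ = (Multiplicative.ofAdd 1, Multiplicative.ofAdd 0) :=
    hf ⟨cElt, c_mem⟩ _ (RR_PP PP_c)
  have hgv : f ⟨gElt, g_mem⟩ = (Multiplicative.ofAdd 0, Multiplicative.ofAdd 1) :=
    hf ⟨gElt, g_mem⟩ _ RR_g
  have htop : Subgroup.closure {f ⟨cElt, c_mem⟩, f ⟨gElt, g_mem⟩} = ⊤ := by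
    rw [hcv, hgv, eq_top_iff]
    rintro p -
    rw [Subgroup.mem_closure_pair]
    refine ⟨(p.1.toAdd.val : ℤ), (p.2.toAdd.val : ℤ), ?_⟩
    revert p
    decide
  refine ⟨partOne, ⟨N_le_K, hker ▸ f.normal_ker⟩, c_mem, g_mem, f, ?_, hker, htop⟩
  rw [← MonoidHom.range_eq_top, eq_top_iff, ← htop, Subgroup.closure_le]
  rintro p (rfl | rfl)
  · exact ⟨_, rfl⟩
  · exact ⟨_, rfl⟩

end
end
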